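/- (Corollary 3.) Suppose Assumption 3 holds, and either Assumption 1.1 or Assumption 1.2 holds, and for all sufficiently large n and every C ⊆ V_n with |C| = r(n), max over nonempty D ⊆ C of E_0[e(D)]·h(λ_C − 1)/(|D|·log(n/|D|)) ≥ 1 + ε, where ε > 0 is the constant used in the scan test. Then the unknown-probability scan test is asymptotically powerful: R_n(ψ^{u}_n) → 0 as n → ∞. -/

import Mathlib

open Finset Filter Asymptotics

namespace CommunityDetection

/-- Potential edges of a graph on `Fin n`: ordered pairs `i < j` of vertices. -/
abbrev Edge (n : ℕ) := {q : Fin n × Fin n // q.1 < q.2}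

/-- A realization of the random graph: presence/absence of each potential edge. -/
abbrev Config (n : ℕ) := Edge n → Bool

/-- Probability of the event `E` when the edge indicators are independent Bernoulli
random variables with parameters `w`. -/
noncomputable def prob (n : ℕ) (w : Edge n → ℝ) (E : Set (Config n)) : ℝ :=
  ∑ a : Config n, E.indicator (fun a => ∏ e : Edge n, (if a e then w e else 1 - w e)) a

/-- Null hypothesis edge parameters. -/
def nullW (n : ℕ) (p : Fin n → Fin n → ℝ) : Edge n → ℝ := fun e => p e.1.1 e.1.2

/-- Alternative hypothesis edge parameters: a community `C` with scaling `lam`. -/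
def altW (n : ℕ) (p : Fin n → Fin n → ℝ) (lam : ℝ) (C : Finset (Fin n)) : Edge n → ℝ :=
  fun e => if e.1.1 ∈ C ∧ e.1.2 ∈ C then lam * p e.1.1 e.1.2 else p e.1.1 e.1.2

/-- The number of edges `e(D)` inside a vertex set `D`. -/
def eCount (n : ℕ) (D : Finset (Fin n)) (a : Config n) : ℝ :=
  ∑ e : Edge n, if e.1.1 ∈ D ∧ e.1.2 ∈ D ∧ a e = true then 1 else 0

/-- The expected number of edges `E₀[e(D)]` inside `D` under the null hypothesis. -/
def expCount (n : ℕ) (p : Fin n → Fin n → ℝ) (D : Finset (Fin n)) : ℝ :=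
  ∑ e : Edge n, if e.1.1 ∈ D ∧ e.1.2 ∈ D then p e.1.1 e.1.2 else 0

/-- The average edge probability `p̄_D` of `D`. -/
noncomputable def pbar (n : ℕ) (p : Fin n → Fin n → ℝ) (D : Finset (Fin n)) : ℝ :=
  expCount n p D / (D.card.choose 2 : ℝ)

/-- The entropy function `h(x) = (x+1)log(x+1) - x`. -/
noncomputable def hFun (x : ℝ) : ℝ := (x + 1) * Real.log (x + 1) - x

/-- The worst-case risk of a test `ψ`: type-I error plus the worst type-II error over
all communities of size `r`. -/
noncomputable def risk (n r : ℕ) (p : Fin n → Fin n → ℝ) (lam : Finset (Fin n) → ℝ)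
    (ψ : Config n → Bool) : ℝ :=
  prob n (nullW n p) {a | ψ a = true} +
    sSup {x | ∃ C : Finset (Fin n), C.card = r ∧
      x = prob n (altW n p (lam C) C) {a | ψ a = false}}

/-- `max_{∅ ≠ D ⊆ C} E₀[e(D)] h(λ_C - 1) / (|D| log(n/|D|))`. -/
noncomputable def condSup (n : ℕ) (p : Fin n → Fin n → ℝ) (lamC : ℝ) (C : Finset (Fin n)) : ℝ :=
  sSup {x | ∃ D : Finset (Fin n), D ⊆ C ∧ D.Nonempty ∧
    x = expCount n p D * hFun (lamC - 1) / ((D.card : ℝ) * Real.log ((n : ℝ) / (D.card : ℝ)))}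

/-- Assumption 1.1. -/
def Assumption11 (p : ∀ n, Fin n → Fin n → ℝ) (r : ℕ → ℕ) : Prop :=
  ∃ δ : ℝ, δ ∈ Set.Ioo (0 : ℝ) (1/2) ∧
    ((fun n => (r n : ℝ)) =O[atTop] fun n => (n : ℝ) ^ ((1 : ℝ)/2 - δ)) ∧
    (∃ γ : ℕ → ℝ, (∀ n, 0 < γ n) ∧ Tendsto γ atTop (nhds 0) ∧
      ∀ n : ℕ, ∀ C : Finset (Fin n), C.card = r n → ∀ D : Finset (Fin n), D ⊆ C → D.Nonempty →
        (D.card : ℝ) < (r n : ℝ) / ((n : ℝ) / (r n : ℝ)) ^ (γ n) →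
        (D.card : ℝ) * pbar n (p n) D / ((r n : ℝ) * pbar n (p n) C) ≤ δ) ∧
    ((fun n => sSup {x | ∃ C : Finset (Fin n), C.card = r n ∧ x = 1 / pbar n (p n) C})
      =o[atTop] fun n => (r n : ℝ) / Real.log ((n : ℝ) / (r n : ℝ)))

/-- Assumption 1.2. -/
def Assumption12 (p : ∀ n, Fin n → Fin n → ℝ) (r : ℕ → ℕ) : Prop :=
  Tendsto (fun n => Real.log (r n : ℝ) / Real.log (n : ℝ)) atTop (nhds 0) ∧
  ((fun n => sSup {x | ∃ C : Finset (Fin n), C.card = r n ∧ x = Real.log (1 / pbar n (p n) C)})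
    =o[atTop] fun n => Real.log ((n : ℝ) / (r n : ℝ)) / Real.log (r n : ℝ))

/-- Assumption 2. -/
def Assumption2 (p : ∀ n, Fin n → Fin n → ℝ) (r : ℕ → ℕ) (lam : ∀ n, Finset (Fin n) → ℝ) :
    Prop :=
  Tendsto (fun n => sSup {x | ∃ C : Finset (Fin n), C.card = r n ∧
    ∃ i ∈ C, ∃ j ∈ C, i ≠ j ∧ x = (lam n C)^2 * p n i j}) atTop (nhds 0)

/-- The known-probability scan statistic `Ψ_D`. -/
noncomputable def scanStat (n : ℕ) (p : Fin n → Fin n → ℝ) (D : Finset (Fin n))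
    (a : Config n) : ℝ :=
  if 0 < expCount n p D then
    expCount n p D * hFun (max (eCount n D a / expCount n p D - 1) 0) /
      ((D.card : ℝ) * Real.log ((n : ℝ) / (D.card : ℝ)))
  else 0

/-- The known-probability scan test. -/
noncomputable def scanTest (n r : ℕ) (p : Fin n → Fin n → ℝ) (ε : ℝ) (a : Config n) : Bool :=
  if 1 + ε / 2 ≤
      sSup {x | ∃ D : Finset (Fin n), D.Nonempty ∧ D.card ≤ r ∧ x = scanStat n p D a}
  then true else false

/-- The objective defining the most informative subgraph `D*_C`. -/
noncomputable def objective (n : ℕ) (p : Fin n → Fin n → ℝ) (D : Finset (Fin n)) : ℝ :=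
  expCount n p D / ((D.card : ℝ) * Real.log ((n : ℝ) / (D.card : ℝ)))

/-- The number of edges `e(D, -D)` between `D` and its complement. -/
def eCross (n : ℕ) (D : Finset (Fin n)) (a : Config n) : ℝ :=
  ∑ e : Edge n,
    if ((e.1.1 ∈ D ∧ e.1.2 ∉ D) ∨ (e.1.1 ∉ D ∧ e.1.2 ∈ D)) ∧ a e = true then 1 else 0

/-- The estimator `ê(D)` of `E₀[e(D)]`. -/
noncomputable def estCount (n : ℕ) (D : Finset (Fin n)) (a : Config n) : ℝ :=
  (Real.sqrt (eCount n Finset.univ a) -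
    Real.sqrt (eCount n Finset.univ a - 2 * eCross n D a))^2 / 4

/-- The thresholded estimator `ê_τ(D)`. -/
noncomputable def estCountTr (n : ℕ) (D : Finset (Fin n)) (a : Config n) : ℝ :=
  max (estCount n D a) ((D.card : ℝ)^2 / (n : ℝ) * (Real.log ((n : ℝ) / (D.card : ℝ)))^4)

/-- The unknown-probability scan statistic `Ψᵘ_D`. -/
noncomputable def scanStatU (n : ℕ) (D : Finset (Fin n)) (a : Config n) : ℝ :=
  estCountTr n D a * hFun (max (eCount n D a / estCountTr n D a - 1) 0) /
    ((D.card : ℝ) * Real.log ((n : ℝ) / (D.card : ℝ)))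

/-- The unknown-probability scan test. -/
noncomputable def scanTestU (n r : ℕ) (ε : ℝ) (a : Config n) : Bool :=
  if 1 + ε / 3 ≤
      sSup {x | ∃ D : Finset (Fin n),
        (r : ℝ) ^ ((1 : ℝ)/3) ≤ (D.card : ℝ) ∧ D.card ≤ r ∧ x = scanStatU n D a}
  then true else false

/-- Assumption 3: maximal inhomogeneity of rank-1 weights. -/
def Assumption3 (θ : ∀ n, Fin n → ℝ) (r : ℕ → ℕ) : Prop :=
  (fun n => (sSup (Set.range (θ n)) / sInf (Set.range (θ n)))^2) =o[atTop]
    fun n => min ((r n : ℝ) ^ ((2 : ℝ)/3)) ((n : ℝ) / (r n : ℝ) * (sInf (Set.range (θ n)))^2)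

/-!
Write `w(D) = ∑_{i ∈ D} θ_i`. In the rank-one model `E₀[e(D)]` equals `w(D)² / 2` up to the diagonal
terms `θ_i²`, while `e(V)` and `e(D, -D)` have means close to `w(V)² / 2` and `w(D) w(V)`. Since
`w(D)` is a small share of `w(V)`, the estimator `ê(D) = (√e(V) - √(e(V) - 2 e(D, -D)))² / 4`,
roughly `e(D, -D)² / (4 e(V))`, is close to `E₀[e(D)]`. Quantitatively, let `η` be the larger of the
fluctuation scale `√(8 log n / (n θ_min²))` and the largest share `r θ_max / (n θ_min)`: the edge
counts have relative accuracy `η` with high probability, and then so does `ê(D)` up to constants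
(`est_ge`, `est_le`).

*Type I error.* Under the null, `ê(D) ≥ (1 - 5η) E₀[e(D)]` for all `D` outside an event of
probability `O(1/n)`. On that event a rejection at `D` forces `e(D)` to be at least the level `v`
for which the statistic with `(1 - 5η) E₀[e(D)]` in place of the estimate equals `1 + ε/3`
(`scan_inv`). Chernoff's bound at `v` gives `exp(-(1 + ε/6) |D| log(n/|D|))`, because the bias of the
estimate costs at most `ε/6` in the exponent (`typeI_loss`); this is where `η² E₀[e(D)]` must be
negligible against `|D| log(n/|D|)`. A union bound over the at most `(en/k)^k` sets of each size `k`
finishes (`Regime.typeI`).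

*Type II error.* The scan condition is witnessed by some `D ⊆ C`, and since
`θ_max / θ_min = o(r^{1/3})` this witness may be taken of size at least `r^{1/3}`
(`Regime.exists_large`), so the test examines it. With high probability `e(D)` keeps a fraction
`1 - ζ` of its excess `(λ_C - 1) E₀[e(D)]` (`signal_strength`), and the estimate, although inflated
by the planted edges and by the truncation, exceeds `E₀[e(D)]` by a relative error at most a small
multiple of `min(1, λ_C - 1)` (`Regime.est_alt`). Legendre duality for `h` (`scan_dual`) converts
these two facts into the lower bound `1 + ε/3` for the statistic (`typeII_gain`, `Regime.typeII`).

*Asymptotics.* `Regime` collects the inequalities used above for one `n`. The bound on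
`(θ_max / θ_min)²` forces `r → ∞`; either of the two density assumptions gives `r² ≤ n` and
`p̄_C ≥ n^{-1/2}`, hence `n θ_min² ≥ n^{1/4}` (`eventually_weight`), which dominates every power of
`log n`. So the regime holds for all large `n` (`eventually_regime`), and both error bounds tend
to `0`.
-/

/-! ### The entropy function -/

lemma hFun_ge {x : ℝ} (hx : 0 ≤ x) : x ^ 2 / (x + 2) ≤ hFun x := by
  have h := Real.le_log_one_add_of_nonneg hx
  have h2 : x ^ 2 / (x + 2) = (x + 1) * (2 * x / (x + 2)) - x := by
    field_simp; ring
  rw [h2, hFun, add_comm x 1]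
  have : (1 + x) * (2 * x / (x + 2)) ≤ (1 + x) * Real.log (1 + x) := by gcongr
  linarith

lemma hFun_nonneg {x : ℝ} (hx : 0 ≤ x) : 0 ≤ hFun x :=
  le_trans (by positivity) (hFun_ge hx)

lemma hFun_ge_sq {x : ℝ} (hx : 0 ≤ x) (hx1 : x ≤ 1) : x ^ 2 ≤ 3 * hFun x := by
  have h := hFun_ge hx
  rw [div_le_iff₀ (by linarith)] at h
  nlinarith [hFun_nonneg hx]

lemma hFun_ge_lin {x : ℝ} (hx1 : 1 ≤ x) : x ≤ 3 * hFun x := by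
  have h := hFun_ge (x := x) (by linarith)
  rw [div_le_iff₀ (by linarith)] at h
  have : 0 ≤ hFun x := hFun_nonneg (by linarith)
  nlinarith

lemma hFun_ge_min {x : ℝ} (hx : 0 ≤ x) : min 1 x * x ≤ 3 * hFun x := by
  rcases le_total x 1 with h | h
  · rw [min_eq_right h]; have := hFun_ge_sq hx h; nlinarith
  · rw [min_eq_left h]; have := hFun_ge_lin h; linarith

lemma hFun_le_sq {x : ℝ} (hx : 0 ≤ x) : hFun x ≤ x ^ 2 := by
  have h := Real.log_le_sub_one_of_pos (show 0 < x + 1 by linarith)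
  rw [hFun]; nlinarith

lemma hFun_le_mul_log {x : ℝ} (hx : 0 ≤ x) : hFun x ≤ x * Real.log (1 + x) := by
  have h := Real.log_le_sub_one_of_pos (show 0 < 1 + x by linarith)
  rw [hFun, add_comm x 1]; nlinarith

/-- The quadratic lower bound for `h` at negative arguments, which governs lower tails. It is
`log z ≤ (z - 1/z) / 2`, that is `u ≤ sinh u`, at `z = 1 / (1 - x)`. -/
lemma hFun_neg_ge {x : ℝ} (hx : 0 ≤ x) (hx1 : x < 1) :
    x ^ 2 / 2 ≤ (1 - x) * Real.log (1 - x) + x := by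
  have h0 : 0 < 1 - x := by linarith
  have h := Real.self_le_sinh_iff.2 (show 0 ≤ -Real.log (1 - x) by
    have := Real.log_le_sub_one_of_pos h0; linarith)
  rw [Real.sinh_eq, neg_neg, Real.exp_neg, Real.exp_log h0] at h
  have h2 : (1 - x) * (-Real.log (1 - x)) ≤ (1 - x) * (((1 - x)⁻¹ - (1 - x)) / 2) := by gcongr
  have h3 : (1 - x) * (((1 - x)⁻¹ - (1 - x)) / 2) = (1 - (1 - x) ^ 2) / 2 := by
    field_simp
  rw [h3] at h2
  nlinarith

/-- Shrinking the argument of `h` by a factor `1 - ζ` costs at most a factor `1 - 2ζ`, because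
`x h'(x) = x log (1 + x) ≤ 2 h(x)`. -/
lemma hFun_shrink {y ζ : ℝ} (hy : 0 ≤ y) (hζ : 0 ≤ ζ) (hζ1 : ζ ≤ 1) :
    (1 - 2 * ζ) * hFun y ≤ hFun ((1 - ζ) * y) := by
  have hy' : 0 ≤ (1 - ζ) * y := mul_nonneg (by linarith) hy
  have hpos : 0 < 1 + (1 - ζ) * y := by linarith
  -- tangent-line bound at `y`
  have h1 : hFun y - ζ * y * Real.log (1 + y) ≤ hFun ((1 - ζ) * y) := by
    have h := Real.log_le_sub_one_of_pos (show 0 < (1 + y) / (1 + (1 - ζ) * y) by positivity)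
    rw [Real.log_div (by positivity) (by positivity)] at h
    have h2 : (1 + (1 - ζ) * y) * (Real.log (1 + y) - Real.log (1 + (1 - ζ) * y)) ≤
        (1 + (1 - ζ) * y) * ((1 + y) / (1 + (1 - ζ) * y) - 1) := by gcongr
    have h3 : (1 + (1 - ζ) * y) * ((1 + y) / (1 + (1 - ζ) * y) - 1) = ζ * y := by
      field_simp; ring
    rw [h3] at h2
    simp only [hFun, add_comm _ (1 : ℝ)]
    nlinarith
  have h2 : y * Real.log (1 + y) ≤ 2 * hFun y := by
    have h := Real.le_log_one_add_of_nonneg hy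
    rw [div_le_iff₀ (by linarith)] at h
    simp only [hFun, add_comm y (1 : ℝ)]
    nlinarith
  nlinarith

lemma hFun_strictMono {x y : ℝ} (hx : 0 ≤ x) (hxy : x < y) : hFun x < hFun y := by
  have h := Real.log_lt_sub_one_of_pos (show 0 < (1 + x) / (1 + y) by
    have : 0 < 1 + y := by linarith
    positivity) (by
      have : 0 < 1 + y := by linarith
      rw [Ne, div_eq_one_iff_eq this.ne']; linarith)
  have hy : 0 < 1 + y := by linarith
  have hx' : 0 < 1 + x := by linarith
  rw [Real.log_div hx'.ne' hy.ne'] at h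
  have h2 : (1 + y) * (Real.log (1 + x) - Real.log (1 + y)) <
      (1 + y) * ((1 + x) / (1 + y) - 1) := by gcongr
  have h3 : (1 + y) * ((1 + x) / (1 + y) - 1) = x - y := by field_simp; ring
  rw [h3] at h2
  have h4 : 0 ≤ Real.log (1 + x) := Real.log_nonneg (by linarith)
  simp only [hFun, add_comm _ (1 : ℝ)]
  nlinarith

lemma exists_hFun_eq {A : ℝ} (hA : 0 ≤ A) : ∃ x, 0 ≤ x ∧ hFun x = A := by
  have hc : ContinuousOn hFun (Set.Icc 0 (3 * A + 1)) := by
    unfold hFun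
    apply ContinuousOn.sub _ continuousOn_id
    apply ContinuousOn.mul (by fun_prop)
    apply ContinuousOn.log (by fun_prop)
    intro x hx; have := hx.1; positivity
  have h := intermediate_value_Icc (show (0 : ℝ) ≤ 3 * A + 1 by linarith) hc
  have h0 : hFun 0 = 0 := by simp [hFun]
  have h1 : A ≤ hFun (3 * A + 1) := by
    have := hFun_ge_lin (x := 3 * A + 1) (by linarith)
    linarith
  obtain ⟨x, hx, hxA⟩ := h ⟨by rw [h0]; exact hA, h1⟩
  exact ⟨x, hx.1, hxA⟩

/-- Legendre duality: the scan functional `T h((E/T - 1)₊)` dominates each of the affine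
functions `(E, T) ↦ E log (1 + x) - T x`, `x ≥ 0`. -/
lemma scan_dual {E T x : ℝ} (hE : 0 ≤ E) (hT : 0 < T) (hx : 0 ≤ x) :
    E * Real.log (1 + x) - T * x ≤ T * hFun (max (E / T - 1) 0) := by
  have hl := Real.log_le_sub_one_of_pos (show 0 < 1 + x by linarith)
  have hl0 : 0 ≤ Real.log (1 + x) := Real.log_nonneg (by linarith)
  rcases le_total E T with h | h
  · have h1 : E / T ≤ 1 := (div_le_one hT).2 h
    rw [max_eq_right (by linarith)]
    have : hFun 0 = 0 := by simp [hFun]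
    rw [this]
    nlinarith
  · have h1 : 1 ≤ E / T := (one_le_div hT).2 h
    rw [max_eq_left (by linarith)]
    obtain ⟨z, hz⟩ : ∃ z, z = E / T := ⟨_, rfl⟩
    have hE' : E = z * T := by rw [hz]; field_simp
    rw [← hz] at h1 ⊢
    have h2 := Real.log_le_sub_one_of_pos (show 0 < (1 + x) / z by positivity)
    rw [Real.log_div (by positivity) (by positivity)] at h2
    have h3 : z * (Real.log (1 + x) - Real.log z) ≤ z * ((1 + x) / z - 1) := by gcongr
    have h4 : z * ((1 + x) / z - 1) = 1 + x - z := by field_simp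
    rw [h4] at h3
    rw [hE', hFun, sub_add_cancel]
    nlinarith

/-- If the scan functional at `(E, T)` reaches the level `t h(x)` for some `t ≤ T`, then
`E ≥ t (1 + x)`. -/
lemma scan_inv {E T t x A : ℝ} (hE : 0 ≤ E) (ht : 0 < t) (htT : t ≤ T)
    (hA : 0 < A) (hxA : t * hFun x = A) (h : A ≤ T * hFun (max (E / T - 1) 0)) :
    t * (1 + x) ≤ E := by
  have hT : 0 < T := lt_of_lt_of_le ht htT
  by_contra! hlt
  rcases le_or_gt E T with h' | h'
  · have h1 : E / T ≤ 1 := (div_le_one hT).2 h'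
    rw [max_eq_right (by linarith)] at h
    have : hFun 0 = 0 := by simp [hFun]
    rw [this] at h
    linarith
  · have h1 : 1 < E / T := (one_lt_div hT).2 h'
    rw [max_eq_left (by linarith)] at h
    have h2 : T * hFun (E / T - 1) = E * Real.log (1 + (E / T - 1)) - T * (E / T - 1) := by
      rw [hFun]; field_simp; ring_nf
    have h3 := scan_dual (E := E) (T := t) (x := E / T - 1) hE ht (by linarith)
    have h4 : 1 < E / t := (one_lt_div ht).2 (by linarith)
    rw [max_eq_left (by linarith)] at h3
    have h5 : hFun (E / t - 1) < hFun x := by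
      apply hFun_strictMono (by linarith)
      have : E / t < 1 + x := by rw [div_lt_iff₀ ht]; linarith
      linarith
    have h6 : t * hFun (E / t - 1) < t * hFun x := by gcongr
    nlinarith

/-! ### Chernoff bounds for sums of independent edge indicators -/

/-- The number of edges of the realization `a` lying in a set `F` of potential edges. -/
noncomputable def cnt (n : ℕ) (F : Finset (Edge n)) (a : Config n) : ℝ :=
  ∑ e ∈ F, if a e = true then (1 : ℝ) else 0

lemma cnt_nonneg (n : ℕ) (F : Finset (Edge n)) (a : Config n) : 0 ≤ cnt n F a :=
  Finset.sum_nonneg fun e _ => by split_ifs <;> norm_num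

lemma weight_nonneg {n : ℕ} {w : Edge n → ℝ} (hw : ∀ e, 0 ≤ w e ∧ w e ≤ 1) (a : Config n) :
    0 ≤ ∏ e : Edge n, (if a e then w e else 1 - w e) :=
  Finset.prod_nonneg fun e _ => by
    split_ifs
    · exact (hw e).1
    · linarith [(hw e).2]

lemma prob_nonneg {n : ℕ} {w : Edge n → ℝ} (hw : ∀ e, 0 ≤ w e ∧ w e ≤ 1)
    (E : Set (Config n)) : 0 ≤ prob n w E :=
  Finset.sum_nonneg fun a _ => Set.indicator_nonneg (fun a _ => weight_nonneg hw a) a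

lemma prob_mono {n : ℕ} {w : Edge n → ℝ} (hw : ∀ e, 0 ≤ w e ∧ w e ≤ 1)
    {E E' : Set (Config n)} (h : E ⊆ E') : prob n w E ≤ prob n w E' :=
  Finset.sum_le_sum fun a _ =>
    Set.indicator_le_indicator_of_subset h (fun a => weight_nonneg hw a) a

lemma prob_union_le {n : ℕ} {w : Edge n → ℝ} (hw : ∀ e, 0 ≤ w e ∧ w e ≤ 1)
    (E E' : Set (Config n)) : prob n w (E ∪ E') ≤ prob n w E + prob n w E' := by
  unfold prob
  rw [← Finset.sum_add_distrib]
  refine Finset.sum_le_sum fun a _ => ?_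
  have h0 := weight_nonneg hw a
  by_cases h1 : a ∈ E <;> by_cases h2 : a ∈ E' <;> simp [h1, h2]
  simpa using h0

lemma prob_empty (n : ℕ) (w : Edge n → ℝ) : prob n w ∅ = 0 := by simp [prob]

lemma prob_biUnion_le {n : ℕ} {w : Edge n → ℝ} (hw : ∀ e, 0 ≤ w e ∧ w e ≤ 1)
    {ι : Type*} (I : Finset ι) (E : ι → Set (Config n)) :
    prob n w (⋃ i ∈ I, E i) ≤ ∑ i ∈ I, prob n w (E i) := by
  classical
  induction I using Finset.induction_on with
  | empty => simp [prob_empty]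
  | insert i s hi ih =>
    rw [Finset.sum_insert hi, Finset.set_biUnion_insert]
    exact (prob_union_le hw _ _).trans (by linarith)

/-- The moment generating function of `cnt n F` factorizes over the edges of `F`. -/
lemma mgf_eq (n : ℕ) (w : Edge n → ℝ) (F : Finset (Edge n)) (t : ℝ) :
    ∑ a : Config n, (∏ e : Edge n, (if a e then w e else 1 - w e)) * Real.exp (t * cnt n F a) =
      ∏ e ∈ F, (1 + (Real.exp t - 1) * w e) := by
  classical
  have h1 : ∀ a : Config n, (∏ e : Edge n, (if a e then w e else 1 - w e)) *
      Real.exp (t * cnt n F a) =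
      ∏ e : Edge n, (fun (e : Edge n) (b : Bool) => (if b then w e else 1 - w e) *
        (if e ∈ F then (if b then Real.exp t else 1) else 1)) e (a e) := by
    intro a
    rw [Finset.prod_mul_distrib]
    congr 1
    rw [Finset.prod_ite_mem, Finset.univ_inter, cnt, Finset.mul_sum, Real.exp_sum]
    refine Finset.prod_congr rfl fun e _ => ?_
    split_ifs <;> simp
  rw [Finset.sum_congr rfl fun a _ => h1 a, ← Fintype.piFinset_univ,
    ← Finset.prod_univ_sum (fun _ => Finset.univ)
      (fun (e : Edge n) (b : Bool) => (if b then w e else 1 - w e) *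
        (if e ∈ F then (if b then Real.exp t else 1) else 1))]
  rw [← Finset.univ_inter F, ← Finset.prod_ite_mem]
  refine Finset.prod_congr rfl fun e _ => ?_
  by_cases he : e ∈ F
  · simp [he]; ring
  · simp [he]

/-- Markov's inequality for `(1 + x) ^ (number of edges in F)`. Positive `x` gives upper tails,
negative `x` lower tails. -/
lemma chernoff {n : ℕ} {w : Edge n → ℝ} (hw : ∀ e, 0 ≤ w e ∧ w e ≤ 1) (F : Finset (Edge n))
    {x v : ℝ} (hx : -1 < x) (E : Set (Config n))
    (hE : ∀ a ∈ E, 0 ≤ Real.log (1 + x) * (cnt n F a - v)) :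
    prob n w E ≤ Real.exp (-v * Real.log (1 + x) + x * ∑ e ∈ F, w e) := by
  have hx0 : 0 < 1 + x := by linarith
  have h1 : prob n w E ≤ Real.exp (-v * Real.log (1 + x)) *
      ∑ a : Config n, (∏ e : Edge n, (if a e then w e else 1 - w e)) *
        Real.exp (Real.log (1 + x) * cnt n F a) := by
    rw [Finset.mul_sum]
    refine Finset.sum_le_sum fun a _ => ?_
    have h0 := weight_nonneg hw a
    by_cases ha : a ∈ E
    · rw [Set.indicator_of_mem ha, mul_left_comm, ← Real.exp_add]
      refine le_mul_of_one_le_right h0 (Real.one_le_exp ?_)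
      have := hE a ha
      linarith
    · rw [Set.indicator_of_notMem ha]
      positivity
  refine h1.trans ?_
  rw [mgf_eq, Real.exp_log hx0, Real.exp_add, Finset.mul_sum, Real.exp_sum]
  gcongr with e he
  · intro e he
    have := hw e
    nlinarith
  · have := Real.add_one_le_exp (x * w e)
    linarith

lemma upper_tail {n : ℕ} {w : Edge n → ℝ} (hw : ∀ e, 0 ≤ w e ∧ w e ≤ 1) (F : Finset (Edge n))
    {U x : ℝ} (hx : 0 ≤ x) (hx1 : x ≤ 1) (hU0 : 0 ≤ U) (hU : ∑ e ∈ F, w e ≤ U) :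
    prob n w {a | (1 + x) * U < cnt n F a} ≤ Real.exp (-(x ^ 2 * U / 3)) := by
  refine (chernoff hw F (x := x) (v := (1 + x) * U) (by linarith) _ ?_).trans ?_
  · intro a ha
    have ha' : (1 + x) * U < cnt n F a := ha
    exact mul_nonneg (Real.log_nonneg (by linarith)) (by linarith)
  · apply Real.exp_le_exp.2
    have h := hFun_ge_sq hx hx1
    rw [hFun, add_comm x 1] at h
    nlinarith

lemma lower_tail {n : ℕ} {w : Edge n → ℝ} (hw : ∀ e, 0 ≤ w e ∧ w e ≤ 1) (F : Finset (Edge n))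
    {m x : ℝ} (hx : 0 ≤ x) (hx1 : x < 1) (hm0 : 0 ≤ m) (hm : m ≤ ∑ e ∈ F, w e) :
    prob n w {a | cnt n F a < (1 - x) * m} ≤ Real.exp (-(x ^ 2 * m / 2)) := by
  refine (chernoff hw F (x := -x) (v := (1 - x) * m) (by linarith) _ ?_).trans ?_
  · intro a ha
    have ha' : cnt n F a < (1 - x) * m := ha
    exact mul_nonneg_of_nonpos_of_nonpos (Real.log_nonpos (by linarith) (by linarith))
      (by linarith)
  · apply Real.exp_le_exp.2
    have h := hFun_neg_ge hx hx1
    rw [← sub_eq_add_neg]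
    nlinarith

/-! ### Vertex-weight sums -/

/-- The total weight `∑ i ∈ D, θ i` of a vertex set. -/
def wt {n : ℕ} (θ : Fin n → ℝ) (D : Finset (Fin n)) : ℝ := ∑ i ∈ D, θ i

/-- Potential edges inside `D`. -/
def insideE {n : ℕ} (D : Finset (Fin n)) : Finset (Edge n) :=
  Finset.univ.filter fun e => e.1.1 ∈ D ∧ e.1.2 ∈ D

/-- Potential edges between `A` and `B`. -/
def betweenE {n : ℕ} (A B : Finset (Fin n)) : Finset (Edge n) :=
  Finset.univ.filter fun e => (e.1.1 ∈ A ∧ e.1.2 ∈ B) ∨ (e.1.1 ∈ B ∧ e.1.2 ∈ A)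

lemma eCount_eq {n : ℕ} (D : Finset (Fin n)) (a : Config n) :
    eCount n D a = cnt n (insideE D) a := by
  rw [eCount, cnt, insideE, Finset.sum_filter]
  refine Finset.sum_congr rfl fun e _ => ?_
  rw [← ite_and]; simp only [and_assoc]

lemma eCross_eq {n : ℕ} (D : Finset (Fin n)) (a : Config n) :
    eCross n D a = cnt n (betweenE D Dᶜ) a := by
  rw [eCross, cnt, betweenE, Finset.sum_filter]
  refine Finset.sum_congr rfl fun e _ => ?_
  rw [← ite_and]; simp only [Finset.mem_compl]

lemma expCount_eq {n : ℕ} (p : Fin n → Fin n → ℝ) (D : Finset (Fin n)) :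
    expCount n p D = ∑ e ∈ insideE D, nullW n p e := by
  rw [expCount, insideE, Finset.sum_filter]; rfl

/-- A symmetric double sum is its diagonal plus twice its sum over the pairs `i < j`. -/
lemma sum_pairs {n : ℕ} (f : Fin n → Fin n → ℝ) (hf : ∀ i j, f i j = f j i) :
    ∑ i, ∑ j, f i j = ∑ i, f i i + 2 * ∑ e : Edge n, f e.1.1 e.1.2 := by
  have h1 : ∑ e : Edge n, f e.1.1 e.1.2 = ∑ i, ∑ j, if i < j then f i j else 0 := by
    rw [← Fintype.sum_prod_type' (f := fun i j => if i < j then f i j else 0),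
      ← Finset.sum_filter]
    exact (Finset.sum_subtype (Finset.univ.filter fun q : Fin n × Fin n => q.1 < q.2)
      (by simp) (fun q => f q.1 q.2)).symm
  have h2 : ∑ i, f i i = ∑ i, ∑ j, if i = j then f i j else 0 := by simp
  have h3 : ∑ e : Edge n, f e.1.1 e.1.2 = ∑ i, ∑ j, if j < i then f i j else 0 := by
    rw [h1, Finset.sum_comm]
    refine Finset.sum_congr rfl fun i _ => Finset.sum_congr rfl fun j _ => ?_
    rw [hf]
  rw [two_mul, h2]
  nth_rewrite 1 [h1]
  rw [h3, ← Finset.sum_add_distrib, ← Finset.sum_add_distrib]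
  refine Finset.sum_congr rfl fun i _ => ?_
  rw [← Finset.sum_add_distrib, ← Finset.sum_add_distrib]
  refine Finset.sum_congr rfl fun j _ => ?_
  rcases lt_trichotomy i j with h | h | h
  · simp [h, h.ne, h.not_gt]
  · simp [h]
  · simp [h, h.ne', h.not_gt]

lemma sum_inside {n : ℕ} (θ : Fin n → ℝ) (D : Finset (Fin n)) :
    ∑ e ∈ insideE D, θ e.1.1 * θ e.1.2 = (wt θ D ^ 2 - ∑ i ∈ D, θ i ^ 2) / 2 := by
  have h := sum_pairs (fun i j => (if i ∈ D then θ i else 0) * (if j ∈ D then θ j else 0))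
    (fun i j => mul_comm _ _)
  simp only [← Finset.mul_sum, ← Finset.sum_mul] at h
  rw [Finset.sum_ite_mem, Finset.univ_inter] at h
  have h2 : ∑ i, (if i ∈ D then θ i else 0) * (if i ∈ D then θ i else 0) = ∑ i ∈ D, θ i ^ 2 := by
    rw [← Finset.univ_inter D, ← Finset.sum_ite_mem]
    refine Finset.sum_congr rfl fun i _ => ?_
    by_cases hi : i ∈ D <;> simp [hi, sq]
  have h3 : ∑ e : Edge n, (if e.1.1 ∈ D then θ e.1.1 else 0) * (if e.1.2 ∈ D then θ e.1.2 else 0)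
      = ∑ e ∈ insideE D, θ e.1.1 * θ e.1.2 := by
    rw [insideE, Finset.sum_filter]
    refine Finset.sum_congr rfl fun e _ => ?_
    by_cases h1 : e.1.1 ∈ D <;> by_cases h2 : e.1.2 ∈ D <;> simp [h1, h2]
  rw [h2, h3] at h
  rw [wt]; linarith

lemma sum_between {n : ℕ} (θ : Fin n → ℝ) {A B : Finset (Fin n)} (hAB : Disjoint A B) :
    ∑ e ∈ betweenE A B, θ e.1.1 * θ e.1.2 = wt θ A * wt θ B := by
  have hd : ∀ i, i ∈ A → i ∉ B := fun i h1 h2 => Finset.disjoint_left.1 hAB h1 h2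
  have h := sum_pairs (fun i j => (if i ∈ A then θ i else 0) * (if j ∈ B then θ j else 0) +
    (if i ∈ B then θ i else 0) * (if j ∈ A then θ j else 0)) (fun i j => by ring)
  simp only [Finset.sum_add_distrib, ← Finset.mul_sum, ← Finset.sum_mul] at h
  rw [Finset.sum_ite_mem, Finset.sum_ite_mem, Finset.univ_inter, Finset.univ_inter] at h
  have h2 : ∀ i, (if i ∈ A then θ i else 0) * (if i ∈ B then θ i else 0) = 0 := by
    intro i
    by_cases hi : i ∈ A
    · simp [hd i hi]
    · simp [hi]
  have h2' : ∀ i, (if i ∈ B then θ i else 0) * (if i ∈ A then θ i else 0) = 0 := by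
    intro i; rw [mul_comm, h2]
  simp only [h2, h2', Finset.sum_const_zero, zero_add] at h
  have h3 : ∑ e : Edge n, (if e.1.1 ∈ A then θ e.1.1 else 0) * (if e.1.2 ∈ B then θ e.1.2 else 0)
      + ∑ e : Edge n, (if e.1.1 ∈ B then θ e.1.1 else 0) * (if e.1.2 ∈ A then θ e.1.2 else 0)
      = ∑ e ∈ betweenE A B, θ e.1.1 * θ e.1.2 := by
    rw [betweenE, Finset.sum_filter, ← Finset.sum_add_distrib]
    refine Finset.sum_congr rfl fun e _ => ?_
    by_cases h1 : e.1.1 ∈ A <;> by_cases h2 : e.1.2 ∈ A <;> by_cases h3 : e.1.1 ∈ B <;>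
      by_cases h4 : e.1.2 ∈ B <;> simp [h1, h2, h3, h4]
    exact absurd h3 (hd _ h1)
  rw [h3] at h
  rw [wt, wt]; linarith

lemma wt_add_compl {n : ℕ} (θ : Fin n → ℝ) (D : Finset (Fin n)) :
    wt θ D + wt θ Dᶜ = wt θ Finset.univ := Finset.sum_add_sum_compl D θ

lemma wt_ge {n : ℕ} {θ : Fin n → ℝ} {a : ℝ} (ha : ∀ i, a ≤ θ i) (D : Finset (Fin n)) :
    D.card * a ≤ wt θ D := by
  rw [← nsmul_eq_mul]; exact Finset.card_nsmul_le_sum _ _ _ fun i _ => ha i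

lemma wt_le {n : ℕ} {θ : Fin n → ℝ} {b : ℝ} (hb : ∀ i, θ i ≤ b) (D : Finset (Fin n)) :
    wt θ D ≤ D.card * b := by
  rw [← nsmul_eq_mul]; exact Finset.sum_le_card_nsmul _ _ _ fun i _ => hb i

lemma wt_sq_le {n : ℕ} {θ : Fin n → ℝ} {b : ℝ} (h0 : ∀ i, 0 ≤ θ i) (hb : ∀ i, θ i ≤ b)
    (D : Finset (Fin n)) : ∑ i ∈ D, θ i ^ 2 ≤ b * wt θ D := by
  rw [wt, Finset.mul_sum]
  exact Finset.sum_le_sum fun i _ => by rw [sq]; exact mul_le_mul_of_nonneg_right (hb i) (h0 i)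

/-! ### Deterministic bounds for the estimator -/

/-- The estimator is `Y² / (√X + √(X - 2Y))²` when `2Y ≤ X`, and the denominator is at most `4X`.
When `2Y > X` the second root is the junk value `0`, and the bound persists since `Y ≤ X`. -/
lemma est_lower {X Y : ℝ} (hX : 0 < X) (hY0 : 0 ≤ Y) (hY : Y ≤ X) :
    Y ^ 2 / (4 * X) ≤ (Real.sqrt X - Real.sqrt (X - 2 * Y)) ^ 2 / 4 := by
  rw [div_le_div_iff₀ (by positivity) (by norm_num)]
  rcases le_total (2 * Y) X with h | h
  · have hu := Real.sq_sqrt hX.le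
    have hv := Real.sq_sqrt (show 0 ≤ X - 2 * Y by linarith)
    have hvu : Real.sqrt (X - 2 * Y) ≤ Real.sqrt X := Real.sqrt_le_sqrt (by linarith)
    have hv0 := Real.sqrt_nonneg (X - 2 * Y)
    generalize Real.sqrt (X - 2 * Y) = v at *
    generalize Real.sqrt X = u at *
    have hYe : Y = (u - v) * (u + v) / 2 := by nlinarith
    have h1 : (u + v) ^ 2 ≤ (2 * u) ^ 2 := pow_le_pow_left₀ (by linarith) (by linarith) 2
    have h2 : (u - v) ^ 2 * (u + v) ^ 2 ≤ (u - v) ^ 2 * (2 * u) ^ 2 := by gcongr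
    rw [hYe, ← hu]
    nlinarith
  · rw [Real.sqrt_eq_zero_of_nonpos (show X - 2 * Y ≤ 0 by linarith), sub_zero,
      Real.sq_sqrt hX.le]
    nlinarith

/-- The denominator of `Y² / (√X + √(X - 2Y))²` is at least `4 (X - 2Y)`. -/
lemma est_upper {X Y : ℝ} (hY0 : 0 ≤ Y) (hY : 2 * Y < X) :
    (Real.sqrt X - Real.sqrt (X - 2 * Y)) ^ 2 / 4 ≤ Y ^ 2 / (4 * (X - 2 * Y)) := by
  have hp : 0 < X - 2 * Y := by linarith
  rw [div_le_div_iff₀ (by norm_num) (by positivity)]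
  have hu := Real.sq_sqrt (show 0 ≤ X by linarith)
  have hv := Real.sq_sqrt hp.le
  have hvu : Real.sqrt (X - 2 * Y) ≤ Real.sqrt X := Real.sqrt_le_sqrt (by linarith)
  have hv0 := Real.sqrt_nonneg (X - 2 * Y)
  generalize Real.sqrt (X - 2 * Y) = v at *
  generalize Real.sqrt X = u at *
  have hYe : Y = (u - v) * (u + v) / 2 := by nlinarith
  have h1 : (2 * v) ^ 2 ≤ (u + v) ^ 2 := pow_le_pow_left₀ (by linarith) (by linarith) 2
  have h2 : (u - v) ^ 2 * (2 * v) ^ 2 ≤ (u - v) ^ 2 * (u + v) ^ 2 := by gcongr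
  rw [← hv, hYe]
  nlinarith

/-- Here `X = e(V)`, `Y = e(D, -D)`, while `s` and `S` are the total weights of `D` and `V`. -/
lemma est_ge {X Y s S η : ℝ} (hη0 : 0 ≤ η) (hη : η ≤ 1 / 100) (hs : 0 < s) (hsS : s ≤ η * S)
    (hYX : Y ≤ X) (hX : X ≤ (1 + η) * (S ^ 2 / 2)) (hY : (1 - η) * (s * (S - s)) ≤ Y) :
    (1 - 5 * η) * (s ^ 2 / 2) ≤ (Real.sqrt X - Real.sqrt (X - 2 * Y)) ^ 2 / 4 := by
  have hS : 0 < S := by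
    by_contra! h
    nlinarith
  have h1 : (1 - η) ^ 2 * (s * S) ≤ Y := by
    refine le_trans ?_ hY
    have : (1 - η) * S ≤ S - s := by linarith
    have h2 : (1 - η) * s * ((1 - η) * S) ≤ (1 - η) * s * (S - s) := by
      gcongr
      have : 0 ≤ 1 - η := by linarith
      positivity
    linarith
  have hq : 0 < (1 - η) ^ 2 := pow_pos (by linarith) 2
  have hY0 : 0 < Y := lt_of_lt_of_le (by positivity) h1
  have hX0 : 0 < X := by linarith
  refine le_trans ?_ (est_lower hX0 hY0.le hYX)
  have h2 : ((1 - η) ^ 2 * (s * S)) ^ 2 ≤ Y ^ 2 := by gcongr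
  rw [le_div_iff₀ (by positivity)]
  refine le_trans ?_ h2
  have h3 : (1 - 5 * η) * (s ^ 2 / 2) * (4 * X) ≤
      (1 - 5 * η) * (s ^ 2 / 2) * (4 * ((1 + η) * (S ^ 2 / 2))) := by
    gcongr
    have : 0 ≤ 1 - 5 * η := by linarith
    positivity
  refine h3.trans ?_
  have h4 : (1 - 5 * η) * (1 + η) ≤ (1 - η) ^ 4 := by
    have h5 : 1 - 2 * η ≤ (1 - η) ^ 2 := by nlinarith
    have h6 : (1 - 2 * η) ^ 2 ≤ ((1 - η) ^ 2) ^ 2 := by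
      gcongr
      linarith
    nlinarith
  have h5 : 0 ≤ s ^ 2 * S ^ 2 := by positivity
  nlinarith

/-- Here `X = e(V)`, `Y = e(D, -D)`, while `s` and `S` are the total weights of `D` and `V`; the
quantity `z` is the relative inflation of `E[Y]` caused by the planted community. -/
lemma est_le {X Y s S η z : ℝ} (hη0 : 0 ≤ η) (hz0 : 0 ≤ z) (hz : η + z ≤ 1 / 200)
    (hs : 0 < s) (hS : 0 < S) (hsS : s ≤ η * S) (hY0 : 0 ≤ Y)
    (hX : (1 - η) * ((1 - η) * (S ^ 2 / 2)) ≤ X) (hY : Y ≤ (1 + η) * (s * S * (1 + z))) :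
    (Real.sqrt X - Real.sqrt (X - 2 * Y)) ^ 2 / 4 ≤ (1 + 20 * (η + z)) * (s ^ 2 / 2) := by
  set g := η + z with hg
  have hg0 : 0 ≤ g := by positivity
  have h1 : Y ≤ (1 + g) ^ 2 * (s * S) := by
    refine hY.trans ?_
    have : (1 + η) * (1 + z) ≤ (1 + g) * (1 + g) := by
      gcongr <;> linarith
    have h0 : 0 < s * S := by positivity
    nlinarith
  have hg2 : (1 + g) ^ 2 ≤ 5 / 4 := by nlinarith
  have h2 : (1 - 7 * g) * (S ^ 2 / 2) ≤ X - 2 * Y := by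
    have h3 : Y ≤ 5 / 4 * (g * S * S) := by
      refine h1.trans ?_
      have : s * S ≤ g * S * S := by
        gcongr
        refine hsS.trans ?_
        gcongr
        linarith
      have h0 : 0 < s * S := by positivity
      nlinarith
    have h4 : (1 - 2 * g) * (S ^ 2 / 2) ≤ X := by
      refine le_trans ?_ hX
      have : 0 < S ^ 2 := by positivity
      nlinarith
    nlinarith
  have hpos : 0 < (1 - 7 * g) * (S ^ 2 / 2) := by
    have : 0 < 1 - 7 * g := by linarith
    positivity
  refine (est_upper hY0 (by linarith)).trans ?_
  have h3 : Y ^ 2 ≤ ((1 + g) ^ 2 * (s * S)) ^ 2 := by gcongr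
  rw [div_le_iff₀ (by linarith)]
  refine h3.trans ?_
  have h4 : (1 + 20 * g) * (s ^ 2 / 2) * (4 * ((1 - 7 * g) * (S ^ 2 / 2))) ≤
      (1 + 20 * g) * (s ^ 2 / 2) * (4 * (X - 2 * Y)) := by gcongr
  refine le_trans ?_ h4
  have h5 : (1 + g) ^ 4 ≤ (1 + 20 * g) * (1 - 7 * g) := by
    have h6 : (1 + g) ^ 2 ≤ 1 + 201 / 100 * g := by nlinarith
    have h7 : ((1 + g) ^ 2) ^ 2 ≤ (1 + 201 / 100 * g) ^ 2 := by gcongr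
    nlinarith
  have h6 : 0 ≤ s ^ 2 * S ^ 2 := by positivity
  nlinarith

/-! ### Deterministic bounds for the scan statistic -/

/-- The bias `5ημ` of the estimate of `μ` costs at most `ε L / 6` in the exponent. -/
lemma typeI_loss {μ L η κ ε x : ℝ} (hμ : 0 < μ) (hL : 0 < L) (hη0 : 0 ≤ η) (hη : η ≤ κ)
    (hε : 0 < ε) (hκ0 : 0 < κ) (hκ : 1200 * (κ * (1 + ε)) ≤ ε) (hx : 0 ≤ x)
    (h2 : η ^ 2 * μ ≤ κ ^ 2 * L)
    (hxA : (1 - 5 * η) * μ * hFun x = (1 + ε / 3) * L) :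
    5 * η * μ * x ≤ ε / 6 * L := by
  have hκε : 0 < κ * ε := by positivity
  have hη' : 5 * η ≤ 1 / 2 := by nlinarith
  have hh := hFun_nonneg hx
  have h3 : μ * hFun x ≤ 2 * ((1 + ε / 3) * L) := by
    rw [← hxA]
    have : 0 ≤ μ * hFun x := by positivity
    nlinarith
  rcases le_total x 1 with h | h
  · have hs := hFun_ge_sq hx h
    have h4 : (5 * η * μ * x) ^ 2 ≤ (ε / 6 * L) ^ 2 := by
      calc (5 * η * μ * x) ^ 2 = 25 * (η ^ 2 * μ) * (μ * x ^ 2) := by ring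
        _ ≤ 25 * (κ ^ 2 * L) * (μ * (3 * hFun x)) := by gcongr
        _ = 75 * (κ ^ 2 * L) * (μ * hFun x) := by ring
        _ ≤ 75 * (κ ^ 2 * L) * (2 * ((1 + ε / 3) * L)) := by gcongr
        _ = 150 * (κ ^ 2 * (1 + ε / 3)) * L ^ 2 := by ring
        _ ≤ 150 * (κ * (1 + ε)) ^ 2 * L ^ 2 := by
          gcongr
          rw [mul_pow]
          gcongr
          nlinarith
        _ ≤ 150 * (ε / 1200) ^ 2 * L ^ 2 := by
          gcongr
          linarith
        _ ≤ (ε / 6 * L) ^ 2 := by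
          have : 0 ≤ ε ^ 2 * L ^ 2 := by positivity
          nlinarith
    exact le_of_sq_le_sq h4 (by positivity)
  · have hs := hFun_ge_lin h
    calc 5 * η * μ * x ≤ 5 * κ * μ * (3 * hFun x) := by gcongr
      _ = 15 * κ * (μ * hFun x) := by ring
      _ ≤ 15 * κ * (2 * ((1 + ε / 3) * L)) := by gcongr
      _ = 30 * (κ * (1 + ε / 3)) * L := by ring
      _ ≤ 30 * (κ * (1 + ε)) * L := by
        gcongr
        linarith
      _ ≤ 30 * (ε / 1200) * L := by
        gcongr
        linarith
      _ ≤ ε / 6 * L := by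
        have : 0 ≤ ε * L := by positivity
        nlinarith

/-- If `e(D)` keeps a fraction `1 - ζ` of its expected excess `yμ` and the estimate `T` of `μ` is
accurate up to `62 κ min(1, y)`, the statistic keeps almost all of the signal `μ h(y)`. -/
lemma typeII_gain {μ L κ ε y ζ E T : ℝ} (hμ : 0 < μ) (hε : 0 < ε)
    (hκ0 : 0 < κ) (hκ : 1200 * (κ * (1 + ε)) ≤ ε) (hζ : ζ = ε / (6 * (1 + ε))) (hy : 0 ≤ y)
    (hT : 0 < T) (hTle : T ≤ μ * (1 + 62 * κ * min 1 y))
    (hE : μ * (1 + (1 - ζ) * y) ≤ E) (hsig : (1 + ε) * L ≤ μ * hFun y) :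
    (1 + ε / 3) * L ≤ T * hFun (max (E / T - 1) 0) := by
  have hζ0 : 0 ≤ ζ := by rw [hζ]; positivity
  have hζ1 : ζ ≤ 1 := by rw [hζ, div_le_one (by positivity)]; linarith
  have hy' : 0 ≤ (1 - ζ) * y := mul_nonneg (by linarith) hy
  have hE0 : 0 ≤ E := le_trans (by positivity) hE
  refine le_trans ?_ (scan_dual (x := (1 - ζ) * y) hE0 hT hy')
  have hl : 0 ≤ Real.log (1 + (1 - ζ) * y) := Real.log_nonneg (by linarith)
  have hmin : 0 ≤ min 1 y := le_min zero_le_one hy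
  have h1 : μ * (1 + (1 - ζ) * y) * Real.log (1 + (1 - ζ) * y) -
      μ * (1 + 62 * κ * min 1 y) * ((1 - ζ) * y) ≤
      E * Real.log (1 + (1 - ζ) * y) - T * ((1 - ζ) * y) := by gcongr
  refine le_trans ?_ h1
  have h2 := hFun_shrink hy hζ0 hζ1
  have h3 := hFun_ge_min hy
  have h4 : (1 - 2 * ζ) * hFun y - 186 * κ * hFun y ≤
      (1 + (1 - ζ) * y) * Real.log (1 + (1 - ζ) * y) -
      (1 + 62 * κ * min 1 y) * ((1 - ζ) * y) := by
    have h5 : 62 * κ * min 1 y * ((1 - ζ) * y) ≤ 186 * κ * hFun y := by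
      calc 62 * κ * min 1 y * ((1 - ζ) * y) ≤ 62 * κ * min 1 y * (1 * y) := by
            gcongr
            linarith
        _ = 62 * κ * (min 1 y * y) := by ring
        _ ≤ 62 * κ * (3 * hFun y) := by gcongr
        _ = _ := by ring
    have h6 : hFun ((1 - ζ) * y) =
      (1 + (1 - ζ) * y) * Real.log (1 + (1 - ζ) * y) - (1 - ζ) * y := by
      rw [hFun, add_comm ((1 - ζ) * y) 1]
    rw [h6] at h2
    linarith
  have h5 : μ * ((1 - 2 * ζ) * hFun y - 186 * κ * hFun y) ≤
      μ * ((1 + (1 - ζ) * y) * Real.log (1 + (1 - ζ) * y) -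
      (1 + 62 * κ * min 1 y) * ((1 - ζ) * y)) := by gcongr
  have h6 : (1 + ε / 3) * L ≤ μ * ((1 - 2 * ζ) * hFun y - 186 * κ * hFun y) := by
    have hc : 186 * κ ≤ ζ := by
      rw [hζ, le_div_iff₀ (by positivity)]; linarith
    have hz : 3 * ζ * (1 + ε) = ε / 2 := by rw [hζ]; field_simp; ring
    have hμh : 0 ≤ μ * hFun y := mul_nonneg hμ.le (hFun_nonneg hy)
    have h3ζ : 0 ≤ 1 - 3 * ζ := by nlinarith
    have h7 : (1 - 3 * ζ) * ((1 + ε) * L) ≤ (1 - 3 * ζ) * (μ * hFun y) := by gcongr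
    have h8 : (1 - 3 * ζ) * (μ * hFun y) ≤
        μ * ((1 - 2 * ζ) * hFun y - 186 * κ * hFun y) := by nlinarith
    rcases le_total 0 L with hL | hL
    · nlinarith
    · have : (1 + ε / 3) * L ≤ 0 := mul_nonpos_of_nonneg_of_nonpos (by positivity) hL
      nlinarith
  linarith

/-! ### The quantitative regime -/

/-- The non-asymptotic form of the hypotheses. The weights lie in `[a, b]`; `η` is the relative
accuracy of the edge counts `e(V)` and `e(D, -D)`, and `κ` a small constant depending only on the
parameter `ε` of the test. -/
structure Regime (n r : ℕ) (θ : Fin n → ℝ) (a b η κ : ℝ) : Prop where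
  a_pos : 0 < a
  a_le : ∀ i, a ≤ θ i
  le_b : ∀ i, θ i ≤ b
  b_le : b ≤ 1
  a_le_b : a ≤ b
  two_le : 2 ≤ r
  sq_le : (r : ℝ) ^ 2 ≤ n
  kappa_pos : 0 < κ
  kappa_le : κ ≤ 1 / 1200
  log_ge : 2 ≤ κ ^ 2 * Real.log n
  eta_pos : 0 < η
  eta_le : η ≤ κ
  share : r * b ≤ η * (n * a)
  eta_log : 8 * Real.log n ≤ η ^ 2 * (n * a ^ 2)
  eta_sq : η ^ 2 * (r * b ^ 2) ≤ κ ^ 2 * Real.log n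
  share_cube : r * b ≤ κ * (n * a ^ 3)
  b_le_a : b ≤ κ * a * (r : ℝ) ^ ((1 : ℝ) / 3)
  thr : 4 * Real.log n ^ 4 ≤ n * a ^ 2

section RegimeFacts

variable {n r : ℕ} {θ : Fin n → ℝ} {a b η κ : ℝ}

lemma Regime.theta_pos (R : Regime n r θ a b η κ) (i : Fin n) : 0 < θ i :=
  R.a_pos.trans_le (R.a_le i)

lemma Regime.four_le (R : Regime n r θ a b η κ) : (4 : ℝ) ≤ n := by
  have h2 : (2 : ℝ) ≤ r := by exact_mod_cast R.two_le
  have := R.sq_le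
  nlinarith

lemma Regime.log_one (R : Regime n r θ a b η κ) : 1 ≤ Real.log n := by
  have h1 := R.log_ge
  have h2 : κ ^ 2 ≤ 1 := pow_le_one₀ R.kappa_pos.le (R.kappa_le.trans (by norm_num))
  by_contra! h
  have h3 := sq_nonneg κ
  nlinarith

lemma Regime.two_r_le (R : Regime n r θ a b η κ) : 2 * (r : ℝ) ≤ n := by
  have h2 : (2 : ℝ) ≤ r := by exact_mod_cast R.two_le
  have := R.sq_le
  nlinarith

lemma Regime.log_div (R : Regime n r θ a b η κ) {k : ℕ} (hk : 1 ≤ k) (hkr : k ≤ r) :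
    Real.log n / 2 ≤ Real.log ((n : ℝ) / k) ∧ Real.log ((n : ℝ) / k) ≤ Real.log n := by
  have hn := R.four_le
  have hk1 : (1 : ℝ) ≤ k := by exact_mod_cast hk
  have hkr' : (k : ℝ) ≤ r := by exact_mod_cast hkr
  rw [Real.log_div (by positivity) (by positivity)]
  have h0 := Real.log_nonneg hk1
  have h1 : Real.log ((k : ℝ) ^ 2) ≤ Real.log n :=
    Real.log_le_log (by positivity) (le_trans (by gcongr) R.sq_le)
  rw [Real.log_pow] at h1
  push_cast at h1
  constructor <;> linarith

lemma Regime.S_ge (R : Regime n r θ a b η κ) : n * a ≤ wt θ Finset.univ := by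
  simpa using wt_ge R.a_le Finset.univ

lemma Regime.S_pos (R : Regime n r θ a b η κ) : 0 < wt θ Finset.univ := by
  have h1 := R.S_ge
  have h2 := R.four_le
  have h3 := R.a_pos
  have : 0 < n * a := by positivity
  linarith

lemma Regime.wt_nonneg (R : Regime n r θ a b η κ) (D : Finset (Fin n)) : 0 ≤ wt θ D :=
  Finset.sum_nonneg fun i _ => (R.theta_pos i).le

/-- A set of size at most `r` carries at most a fraction `η` of the total weight, which is what
makes the estimator of `E₀[e(D)]` nearly unbiased. -/
lemma Regime.wt_le_share (R : Regime n r θ a b η κ) {D : Finset (Fin n)} (hD : D.card ≤ r) :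
    wt θ D ≤ η * wt θ Finset.univ := by
  have h0 : 0 < b := R.a_pos.trans_le R.a_le_b
  calc wt θ D ≤ D.card * b := wt_le R.le_b D
    _ ≤ r * b := by gcongr
    _ ≤ η * (n * a) := R.share
    _ ≤ η * wt θ Finset.univ := mul_le_mul_of_nonneg_left R.S_ge R.eta_pos.le

lemma Regime.card_pos (R : Regime n r θ a b η κ) {k : ℕ}
    (hk : (r : ℝ) ^ ((1 : ℝ) / 3) ≤ k) : 1 ≤ k := by
  have h2 : (1 : ℝ) ≤ r := by exact_mod_cast (le_trans one_le_two R.two_le)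
  have h3 : (1 : ℝ) ≤ (r : ℝ) ^ ((1 : ℝ) / 3) := Real.one_le_rpow h2 (by norm_num)
  exact_mod_cast h3.trans hk

/-- The diagonal terms `θ_i²`, absent from `E₀[e(D)]`, are negligible once `|D| ≥ r ^ (1/3)`. -/
lemma Regime.b_le_wt (R : Regime n r θ a b η κ) {D : Finset (Fin n)}
    (hD : (r : ℝ) ^ ((1 : ℝ) / 3) ≤ D.card) : b ≤ κ * wt θ D := by
  have h0 := R.a_pos
  have h1 := R.kappa_pos
  calc b ≤ κ * a * (r : ℝ) ^ ((1 : ℝ) / 3) := R.b_le_a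
    _ ≤ κ * a * D.card := by gcongr
    _ = κ * (D.card * a) := by ring
    _ ≤ κ * wt θ D := mul_le_mul_of_nonneg_left (wt_ge R.a_le D) h1.le

lemma Regime.wt_pos (R : Regime n r θ a b η κ) {D : Finset (Fin n)}
    (hD : (r : ℝ) ^ ((1 : ℝ) / 3) ≤ D.card) : 0 < wt θ D := by
  have h1 := R.card_pos hD
  have h2 := wt_ge R.a_le D
  have h3 := R.a_pos
  have : (0 : ℝ) < D.card * a := by positivity
  linarith

variable {p : Fin n → Fin n → ℝ}

lemma expCount_rank_one (hp : ∀ i j, p i j = θ i * θ j) (D : Finset (Fin n)) :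
    expCount n p D = (wt θ D ^ 2 - ∑ i ∈ D, θ i ^ 2) / 2 := by
  rw [expCount_eq, ← sum_inside]
  exact Finset.sum_congr rfl fun e _ => hp _ _

lemma expCount_le (hp : ∀ i j, p i j = θ i * θ j) (D : Finset (Fin n)) :
    expCount n p D ≤ wt θ D ^ 2 / 2 := by
  rw [expCount_rank_one hp]
  have : 0 ≤ ∑ i ∈ D, θ i ^ 2 := Finset.sum_nonneg fun i _ => sq_nonneg _
  linarith

lemma Regime.expCount_ge (R : Regime n r θ a b η κ) (hp : ∀ i j, p i j = θ i * θ j)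
    (D : Finset (Fin n)) : wt θ D ^ 2 / 2 ≤ expCount n p D + b * wt θ D / 2 := by
  rw [expCount_rank_one hp]
  have := wt_sq_le (fun i => (R.theta_pos i).le) R.le_b D
  linarith

lemma Regime.expCount_ge' (R : Regime n r θ a b η κ) (hp : ∀ i j, p i j = θ i * θ j)
    {D : Finset (Fin n)} (hD : (r : ℝ) ^ ((1 : ℝ) / 3) ≤ D.card) :
    3 / 8 * wt θ D ^ 2 ≤ expCount n p D := by
  have h1 := R.expCount_ge hp D
  have h2 := R.b_le_wt hD
  have h3 := R.wt_pos hD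
  have h4 := R.kappa_le
  have h5 : b ≤ 1 / 1200 * wt θ D := h2.trans (by gcongr)
  nlinarith

lemma Regime.expCount_pos (R : Regime n r θ a b η κ) (hp : ∀ i j, p i j = θ i * θ j)
    {D : Finset (Fin n)} (hD : (r : ℝ) ^ ((1 : ℝ) / 3) ≤ D.card) : 0 < expCount n p D := by
  have h1 := R.expCount_ge' hp hD
  have h3 := R.wt_pos hD
  have : 0 < 3 / 8 * wt θ D ^ 2 := by positivity
  linarith

lemma Regime.L_pos (R : Regime n r θ a b η κ) {D : Finset (Fin n)}
    (hD : (r : ℝ) ^ ((1 : ℝ) / 3) ≤ D.card) (hDr : D.card ≤ r) :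
    0 < (D.card : ℝ) * Real.log ((n : ℝ) / D.card) := by
  have h1 := R.card_pos hD
  have h2 := (R.log_div h1 hDr).1
  have h3 := R.log_one
  have : 0 < Real.log ((n : ℝ) / D.card) := by linarith
  positivity

/-- The expected number of edges inside `D` is at most `r b² / log n` times the entropy
`|D| log (n / |D|)`. -/
lemma Regime.expCount_log_le (R : Regime n r θ a b η κ) (hp : ∀ i j, p i j = θ i * θ j)
    {D : Finset (Fin n)} (hD : (r : ℝ) ^ ((1 : ℝ) / 3) ≤ D.card) (hDr : D.card ≤ r) :
    expCount n p D * Real.log n ≤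
      r * b ^ 2 * ((D.card : ℝ) * Real.log ((n : ℝ) / D.card)) := by
  have h1 := R.card_pos hD
  have h2 := (R.log_div h1 hDr).1
  have h3 := R.log_one
  have h4 : expCount n p D ≤ (D.card * b) ^ 2 / 2 := by
    refine (expCount_le hp D).trans ?_
    have := wt_le R.le_b D
    have := R.wt_nonneg D
    gcongr
  calc expCount n p D * Real.log n ≤ (D.card * b) ^ 2 / 2 * Real.log n := by gcongr
    _ = D.card * b ^ 2 * (D.card * (Real.log n / 2)) := by ring
    _ ≤ r * b ^ 2 * ((D.card : ℝ) * Real.log ((n : ℝ) / D.card)) := by gcongr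

/-- The squared relative accuracy of the edge counts, multiplied by the mean `E₀[e(D)]`, is
negligible against the entropy. -/
lemma Regime.eta_expCount_le (R : Regime n r θ a b η κ) (hp : ∀ i j, p i j = θ i * θ j)
    {D : Finset (Fin n)} (hD : (r : ℝ) ^ ((1 : ℝ) / 3) ≤ D.card) (hDr : D.card ≤ r) :
    η ^ 2 * expCount n p D ≤ κ ^ 2 * ((D.card : ℝ) * Real.log ((n : ℝ) / D.card)) := by
  have h1 := R.expCount_log_le hp hD hDr
  have h3 := R.log_one
  have hL := R.L_pos hD hDr
  have h4 : η ^ 2 * expCount n p D * Real.log n ≤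
      κ ^ 2 * ((D.card : ℝ) * Real.log ((n : ℝ) / D.card)) * Real.log n := by
    calc η ^ 2 * expCount n p D * Real.log n = η ^ 2 * (expCount n p D * Real.log n) := by ring
      _ ≤ η ^ 2 * (r * b ^ 2 * ((D.card : ℝ) * Real.log ((n : ℝ) / D.card))) := by gcongr
      _ = η ^ 2 * (r * b ^ 2) * ((D.card : ℝ) * Real.log ((n : ℝ) / D.card)) := by ring
      _ ≤ κ ^ 2 * Real.log n * ((D.card : ℝ) * Real.log ((n : ℝ) / D.card)) :=
        mul_le_mul_of_nonneg_right R.eta_sq hL.le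
      _ = _ := by ring
  exact le_of_mul_le_mul_right h4 (by linarith)

lemma Regime.nullW_mem (R : Regime n r θ a b η κ) (hp : ∀ i j, p i j = θ i * θ j) (e : Edge n) :
    0 ≤ nullW n p e ∧ nullW n p e ≤ 1 := by
  have h1 := R.theta_pos e.1.1
  have h2 := R.theta_pos e.1.2
  have h3 := (R.le_b e.1.1).trans R.b_le
  have h4 := (R.le_b e.1.2).trans R.b_le
  rw [nullW, hp]
  exact ⟨by positivity, mul_le_one₀ h3 h2.le h4⟩

lemma sum_null_univ (hp : ∀ i j, p i j = θ i * θ j) :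
    ∑ e ∈ insideE Finset.univ, nullW n p e ≤ wt θ Finset.univ ^ 2 / 2 := by
  rw [← expCount_eq]; exact expCount_le hp _

lemma sum_null_cross (hp : ∀ i j, p i j = θ i * θ j) (D : Finset (Fin n)) :
    ∑ e ∈ betweenE D Dᶜ, nullW n p e = wt θ D * (wt θ Finset.univ - wt θ D) := by
  rw [← wt_add_compl θ D, add_sub_cancel_left, ← sum_between θ disjoint_compl_right]
  exact Finset.sum_congr rfl fun e _ => hp _ _

lemma cross_le_total (D : Finset (Fin n)) (c : Config n) :
    eCross n D c ≤ eCount n Finset.univ c := by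
  rw [eCross_eq, eCount_eq]
  refine Finset.sum_le_sum_of_subset_of_nonneg ?_ fun e _ _ => by split_ifs <;> norm_num
  intro e _
  simp [insideE]

end RegimeFacts

/-! ### Type I error -/

section TypeI

variable {n r : ℕ} {θ : Fin n → ℝ} {a b η κ ε : ℝ} {p : Fin n → Fin n → ℝ}

/-- For one set `D`: on the event that `e(V)` is not too large and `e(D, -D)` not too small, the
statistic exceeds the threshold with probability at most `(n/|D|)^{-(1 + ε/6)|D|}`. -/
lemma Regime.typeI_single (R : Regime n r θ a b η κ) (hp : ∀ i j, p i j = θ i * θ j)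
    (hε : 0 < ε) (hκ : 1200 * (κ * (1 + ε)) ≤ ε)
    {D : Finset (Fin n)} (hD : (r : ℝ) ^ ((1 : ℝ) / 3) ≤ D.card) (hDr : D.card ≤ r) :
    prob n (nullW n p) {c | eCount n Finset.univ c ≤ (1 + η) * (wt θ Finset.univ ^ 2 / 2) ∧
      (1 - η) * (wt θ D * (wt θ Finset.univ - wt θ D)) ≤ eCross n D c ∧
      1 + ε / 3 ≤ scanStatU n D c} ≤
    Real.exp (-((1 + ε / 6) * ((D.card : ℝ) * Real.log ((n : ℝ) / D.card)))) := by
  have hL := R.L_pos hD hDr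
  have hμ := R.expCount_pos hp hD
  have h2 := R.eta_expCount_le hp hD hDr
  have hμs := expCount_le hp D
  have hmean : ∑ e ∈ insideE D, nullW n p e = expCount n p D := (expCount_eq p D).symm
  set L := (D.card : ℝ) * Real.log ((n : ℝ) / D.card) with hLdef
  set μ := expCount n p D with hμdef
  have hη100 : η ≤ 1 / 100 := R.eta_le.trans (R.kappa_le.trans (by norm_num))
  have hη5 : 0 < 1 - 5 * η := by linarith
  have ht : 0 < (1 - 5 * η) * μ := by positivity
  obtain ⟨x, hx0, hx⟩ := exists_hFun_eq (A := (1 + ε / 3) * L / ((1 - 5 * η) * μ)) (by positivity)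
  have hxA : (1 - 5 * η) * μ * hFun x = (1 + ε / 3) * L := by rw [hx]; field_simp
  have hloss := typeI_loss hμ hL R.eta_pos.le R.eta_le hε R.kappa_pos hκ hx0 h2 hxA
  refine (chernoff (R.nullW_mem hp) (insideE D) (x := x) (v := (1 - 5 * η) * μ * (1 + x))
    (by linarith) _ ?_).trans ?_
  · rintro c ⟨hX, hY, hstat⟩
    refine mul_nonneg (Real.log_nonneg (by linarith)) ?_
    rw [← eCount_eq, sub_nonneg]
    have hest : (1 - 5 * η) * μ ≤ estCountTr n D c := by
      refine le_trans ?_ (le_max_left _ _)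
      have h3 := est_ge R.eta_pos.le hη100 (R.wt_pos hD) (R.wt_le_share hDr)
        (cross_le_total D c) hX hY
      refine le_trans ?_ h3
      gcongr
    rw [scanStatU, le_div_iff₀ hL] at hstat
    refine scan_inv ?_ ht hest (by positivity) hxA hstat
    rw [eCount_eq]; exact cnt_nonneg _ _ _
  · apply Real.exp_le_exp.2
    rw [hmean]
    have h4 : (1 - 5 * η) * μ * hFun x =
        (1 - 5 * η) * μ * (1 + x) * Real.log (1 + x) - (1 - 5 * η) * μ * x := by
      rw [hFun, add_comm x 1]; ring
    nlinarith

lemma Regime.typeI_X (R : Regime n r θ a b η κ) (hp : ∀ i j, p i j = θ i * θ j) :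
    prob n (nullW n p) {c | (1 + η) * (wt θ Finset.univ ^ 2 / 2) < eCount n Finset.univ c} ≤
      1 / n := by
  have hη1 : η ≤ 1 := R.eta_le.trans (R.kappa_le.trans (by norm_num))
  have h := upper_tail (R.nullW_mem hp) (insideE Finset.univ) R.eta_pos.le hη1
    (U := wt θ Finset.univ ^ 2 / 2) (by positivity) (sum_null_univ hp)
  simp only [eCount_eq]
  refine h.trans ?_
  have hn := R.four_le
  have h1 : Real.exp (-Real.log n) = 1 / n := by
    rw [Real.exp_neg, Real.exp_log (by linarith), one_div]
  rw [← h1]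
  apply Real.exp_le_exp.2
  have h2 : (n * a) ^ 2 ≤ wt θ Finset.univ ^ 2 := by
    have := R.S_ge
    have := R.a_pos
    gcongr
  have h3 : η ^ 2 * (n * a) ^ 2 ≤ η ^ 2 * wt θ Finset.univ ^ 2 := by gcongr
  have h4 : n * (8 * Real.log n) ≤ η ^ 2 * (n * a) ^ 2 := by
    have := mul_le_mul_of_nonneg_left R.eta_log (show (0 : ℝ) ≤ n by linarith)
    nlinarith
  have h5 := R.log_one
  nlinarith

lemma Regime.typeI_Y (R : Regime n r θ a b η κ) (hp : ∀ i j, p i j = θ i * θ j)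
    {D : Finset (Fin n)} (hDr : D.card ≤ r) :
    prob n (nullW n p)
      {c | eCross n D c < (1 - η) * (wt θ D * (wt θ Finset.univ - wt θ D))} ≤
      (1 / (n : ℝ) ^ 2) ^ D.card := by
  have hη1 : η < 1 := R.eta_le.trans_lt (R.kappa_le.trans_lt (by norm_num))
  have hn := R.four_le
  have ha := R.a_pos
  have h2r := R.two_r_le
  have hkr : (D.card : ℝ) ≤ r := by exact_mod_cast hDr
  have hcomp : (n : ℝ) / 2 * a ≤ wt θ Finset.univ - wt θ D := by
    rw [← wt_add_compl θ D, add_sub_cancel_left]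
    refine le_trans ?_ (wt_ge R.a_le Dᶜ)
    rw [Finset.card_compl, Nat.cast_sub (by simpa using Finset.card_le_univ D), Fintype.card_fin]
    gcongr
    linarith
  have hD := wt_ge R.a_le D
  have hge : (D.card * a) * ((n : ℝ) / 2 * a) ≤ wt θ D * (wt θ Finset.univ - wt θ D) :=
    mul_le_mul hD hcomp (by positivity) (R.wt_nonneg D)
  have h := lower_tail (R.nullW_mem hp) (betweenE D Dᶜ) R.eta_pos.le hη1
    (m := wt θ D * (wt θ Finset.univ - wt θ D)) (le_trans (by positivity) hge)
    (sum_null_cross hp D).ge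
  simp only [eCross_eq]
  refine h.trans ?_
  have h1 : Real.exp (-(D.card * (2 * Real.log n))) = (1 / (n : ℝ) ^ 2) ^ D.card := by
    rw [← mul_neg, Real.exp_nat_mul, Real.exp_neg, one_div]
    congr 2
    rw [show (2 : ℝ) * Real.log n = ((2 : ℕ) : ℝ) * Real.log n by norm_num, Real.exp_nat_mul,
      Real.exp_log (by linarith)]
  rw [← h1]
  apply Real.exp_le_exp.2
  have h3 : η ^ 2 * ((D.card * a) * ((n : ℝ) / 2 * a)) ≤
      η ^ 2 * (wt θ D * (wt θ Finset.univ - wt θ D)) := by gcongr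
  have h4 : (D.card : ℝ) * (8 * Real.log n) ≤ D.card * (η ^ 2 * (n * a ^ 2)) :=
    mul_le_mul_of_nonneg_left R.eta_log (by positivity)
  nlinarith

end TypeI

/-- Union bound over vertex sets, organized by size. -/
lemma sum_card_le {n r : ℕ} (I : Finset (Finset (Fin n))) (hI : ∀ D ∈ I, 1 ≤ D.card ∧ D.card ≤ r)
    {f : ℕ → ℝ} {q : ℝ} (hf : ∀ k, 0 ≤ f k) (hq : 0 ≤ q) (hq2 : q ≤ 1 / 2)
    (h : ∀ k, 1 ≤ k → k ≤ r → (n.choose k : ℝ) * f k ≤ q ^ k) :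
    ∑ D ∈ I, f D.card ≤ 2 * q := by
  classical
  have hmaps : ∀ D ∈ I, D.card ∈ Finset.Icc 1 r := fun D hD => Finset.mem_Icc.2 (hI D hD)
  rw [← Finset.sum_fiberwise_of_maps_to hmaps]
  calc ∑ k ∈ Finset.Icc 1 r, ∑ D ∈ I with D.card = k, f D.card
      ≤ ∑ k ∈ Finset.Icc 1 r, q ^ k := by
        refine Finset.sum_le_sum fun k hk => ?_
        obtain ⟨hk1, hk2⟩ := Finset.mem_Icc.1 hk
        refine le_trans ?_ (h k hk1 hk2)
        rw [Finset.sum_congr rfl (g := fun _ => f k)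
          (fun D hD => by rw [(Finset.mem_filter.1 hD).2]), Finset.sum_const, nsmul_eq_mul]
        refine mul_le_mul_of_nonneg_right ?_ (hf k)
        have : (I.filter fun D => D.card = k).card ≤ n.choose k := by
          have h2 : (Finset.powersetCard k (Finset.univ : Finset (Fin n))).card = n.choose k := by
            simp
          rw [← h2]
          refine Finset.card_le_card fun D hD => ?_
          simp [(Finset.mem_filter.1 hD).2]
        exact_mod_cast this
    _ = ∑ k ∈ Finset.range r, q ^ (k + 1) := by
        rw [Finset.range_eq_Ico, Finset.sum_Ico_add' (fun k => q ^ k) 0 r 1]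
        rfl
    _ ≤ ∑ k ∈ Finset.range r, q * (1 / 2) ^ k := by
        refine Finset.sum_le_sum fun k _ => ?_
        rw [pow_succ']
        gcongr
    _ = q * ∑ k ∈ Finset.range r, (1 / 2) ^ k := by rw [Finset.mul_sum]
    _ ≤ q * 2 := by
        gcongr
        exact sum_geometric_two_le r
    _ = 2 * q := by ring

section TypeISum

variable {n r : ℕ} {θ : Fin n → ℝ} {a b η κ ε : ℝ} {p : Fin n → Fin n → ℝ}

/-- The number of sets of size `k` is at most `(e n / k) ^ k`; the surplus `ε / 6` in the exponent
leaves a geometric term, as `log (n / k) ≥ log n / 2`. -/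
lemma Regime.choose_entropy (R : Regime n r θ a b η κ) (hε : 0 < ε) {k : ℕ} (hk : 1 ≤ k)
    (hkr : k ≤ r) :
    (n.choose k : ℝ) * Real.exp (-((1 + ε / 6) * (k * Real.log ((n : ℝ) / k)))) ≤
      Real.exp (1 - ε / 12 * Real.log n) ^ k := by
  have hn := R.four_le
  have hk0 : (0 : ℝ) < k := by exact_mod_cast hk
  have h1 : (n.choose k : ℝ) ≤ (n : ℝ) ^ k / k.factorial := Nat.choose_le_pow_div k n
  have h2 : (k : ℝ) ^ k / k.factorial ≤ Real.exp k := Real.pow_div_factorial_le_exp k hk0.le k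
  have h3 : Real.exp (-((1 + ε / 6) * (k * Real.log ((n : ℝ) / k)))) =
      ((k : ℝ) / n) ^ k * Real.exp (-(ε / 6 * (k * Real.log ((n : ℝ) / k)))) := by
    have : ((k : ℝ) / n) ^ k = Real.exp (-(k * Real.log ((n : ℝ) / k))) := by
      rw [← mul_neg, ← Real.log_inv, inv_div, Real.exp_nat_mul, Real.exp_log (by positivity)]
    rw [this, ← Real.exp_add]
    congr 1
    ring
  have h4 := (R.log_div hk hkr).1
  calc (n.choose k : ℝ) * Real.exp (-((1 + ε / 6) * (k * Real.log ((n : ℝ) / k))))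
      ≤ (n : ℝ) ^ k / k.factorial * (((k : ℝ) / n) ^ k *
        Real.exp (-(ε / 6 * (k * Real.log ((n : ℝ) / k))))) := by rw [h3]; gcongr
    _ = (k : ℝ) ^ k / k.factorial * Real.exp (-(ε / 6 * (k * Real.log ((n : ℝ) / k)))) := by
        rw [div_pow]
        field_simp
    _ ≤ Real.exp k * Real.exp (-(ε / 6 * (k * (Real.log n / 2)))) := by gcongr
    _ = Real.exp (1 - ε / 12 * Real.log n) ^ k := by
        rw [← Real.exp_add, ← Real.exp_nat_mul]
        congr 1
        ring

lemma Regime.typeI (R : Regime n r θ a b η κ) (hp : ∀ i j, p i j = θ i * θ j)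
    (hε : 0 < ε) (hκ : 1200 * (κ * (1 + ε)) ≤ ε)
    (hq : Real.exp (1 - ε / 12 * Real.log n) ≤ 1 / 2) :
    prob n (nullW n p) {c | scanTestU n r ε c = true} ≤
      1 / n + 2 * (1 / n) + 2 * Real.exp (1 - ε / 12 * Real.log n) := by
  classical
  have hn := R.four_le
  set I : Finset (Finset (Fin n)) := Finset.univ.filter fun D =>
    (r : ℝ) ^ ((1 : ℝ) / 3) ≤ D.card ∧ D.card ≤ r with hI
  have hImem : ∀ D ∈ I, (r : ℝ) ^ ((1 : ℝ) / 3) ≤ D.card ∧ D.card ≤ r :=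
    fun D hD => (Finset.mem_filter.1 hD).2
  have hI1 : ∀ D ∈ I, 1 ≤ D.card ∧ D.card ≤ r :=
    fun D hD => ⟨R.card_pos (hImem D hD).1, (hImem D hD).2⟩
  have hw := R.nullW_mem hp
  set B0 : Set (Config n) := {c | (1 + η) * (wt θ Finset.univ ^ 2 / 2) < eCount n Finset.univ c}
  set B1 : Finset (Fin n) → Set (Config n) := fun D =>
    {c | eCross n D c < (1 - η) * (wt θ D * (wt θ Finset.univ - wt θ D))}
  set B2 : Finset (Fin n) → Set (Config n) := fun D =>
    {c | eCount n Finset.univ c ≤ (1 + η) * (wt θ Finset.univ ^ 2 / 2) ∧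
      (1 - η) * (wt θ D * (wt θ Finset.univ - wt θ D)) ≤ eCross n D c ∧
      1 + ε / 3 ≤ scanStatU n D c}
  have hsub : {c | scanTestU n r ε c = true} ⊆ (B0 ∪ ⋃ D ∈ I, B1 D) ∪ ⋃ D ∈ I, B2 D := by
    intro c hc
    have hc' : 1 + ε / 3 ≤ sSup {x | ∃ D : Finset (Fin n),
        (r : ℝ) ^ ((1 : ℝ)/3) ≤ (D.card : ℝ) ∧ D.card ≤ r ∧ x = scanStatU n D c} := by
      by_contra h
      simp only [Set.mem_ofPred_eq, scanTestU, if_neg h] at hc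
      exact absurd hc (by decide)
    set A := {x | ∃ D : Finset (Fin n),
        (r : ℝ) ^ ((1 : ℝ)/3) ≤ (D.card : ℝ) ∧ D.card ≤ r ∧ x = scanStatU n D c} with hA
    have hfin : A.Finite := (Set.finite_range fun D => scanStatU n D c).subset (by
      rintro x ⟨D, _, _, rfl⟩
      exact ⟨D, rfl⟩)
    have hne : A.Nonempty := by
      by_contra hne
      rw [Set.not_nonempty_iff_eq_empty.1 hne, Real.sSup_empty] at hc'
      linarith
    obtain ⟨D, hD1, hD2, hD⟩ := hne.csSup_mem hfin
    rw [hD] at hc'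
    have hDI : D ∈ I := Finset.mem_filter.2 ⟨Finset.mem_univ _, hD1, hD2⟩
    by_cases h0 : c ∈ B0
    · exact Or.inl (Or.inl h0)
    by_cases h1 : c ∈ B1 D
    · exact Or.inl (Or.inr (Set.mem_biUnion hDI h1))
    exact Or.inr (Set.mem_biUnion hDI ⟨not_lt.1 h0, not_lt.1 h1, hc'⟩)
  refine (prob_mono hw hsub).trans ((prob_union_le hw _ _).trans ?_)
  refine add_le_add ((prob_union_le hw _ _).trans (add_le_add (R.typeI_X hp) ?_)) ?_
  · refine (prob_biUnion_le hw I B1).trans ?_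
    refine (Finset.sum_le_sum fun D hD => R.typeI_Y hp (hImem D hD).2).trans ?_
    refine sum_card_le I hI1 (f := fun k => (1 / (n : ℝ) ^ 2) ^ k) (fun k => by positivity)
      (by positivity) ?_ ?_
    · rw [div_le_div_iff₀ (by linarith) (by norm_num)]; linarith
    · intro k _ _
      calc (n.choose k : ℝ) * (1 / (n : ℝ) ^ 2) ^ k ≤ (n : ℝ) ^ k * (1 / (n : ℝ) ^ 2) ^ k := by
            gcongr
            exact_mod_cast Nat.choose_le_pow n k
        _ = (1 / (n : ℝ)) ^ k := by
            rw [← mul_pow]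
            congr 1
            field_simp
  · refine (prob_biUnion_le hw I B2).trans ?_
    refine (Finset.sum_le_sum fun D hD =>
      R.typeI_single hp hε hκ (hImem D hD).1 (hImem D hD).2).trans ?_
    exact sum_card_le I hI1
      (f := fun k => Real.exp (-((1 + ε / 6) * ((k : ℝ) * Real.log ((n : ℝ) / k)))))
      (fun k => (Real.exp_pos _).le) (Real.exp_pos _).le hq
      fun k hk hkr => R.choose_entropy hε hk hkr

end TypeISum

/-! ### Type II error -/

section TypeII

variable {n r : ℕ} {θ : Fin n → ℝ} {a b η κ ε : ℝ} {p : Fin n → Fin n → ℝ}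

/-- A set `D ⊆ C` witnessing the scan condition may be taken of size at least `r ^ (1/3)`: if a
smaller set satisfies the condition then so does `C` itself, because the weights vary by a factor
smaller than `r ^ (1/3)`. -/
lemma Regime.exists_large (R : Regime n r θ a b η κ) (hp : ∀ i j, p i j = θ i * θ j)
    {C : Finset (Fin n)} (hC : C.card = r) {lam : ℝ} (hlam : 1 ≤ lam) (hε : 0 < ε)
    (hcond : 1 + ε ≤ condSup n p lam C) :
    ∃ D ⊆ C, (r : ℝ) ^ ((1 : ℝ) / 3) ≤ D.card ∧ D.card ≤ r ∧
      (1 + ε) * ((D.card : ℝ) * Real.log ((n : ℝ) / D.card)) ≤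
        expCount n p D * hFun (lam - 1) := by
  have hr2 := R.two_le
  have hr1 : (1 : ℝ) ≤ r := by exact_mod_cast (le_trans one_le_two hr2)
  have hrC : (r : ℝ) ^ ((1 : ℝ) / 3) ≤ C.card := by
    rw [hC]; exact Real.rpow_le_self_of_one_le hr1 (by norm_num)
  have hh : 0 ≤ hFun (lam - 1) := hFun_nonneg (by linarith)
  rw [condSup] at hcond
  -- The supremum over the finitely many `D ⊆ C` is attained.
  set A := {x | ∃ D : Finset (Fin n), D ⊆ C ∧ D.Nonempty ∧
    x = expCount n p D * hFun (lam - 1) /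
      ((D.card : ℝ) * Real.log ((n : ℝ) / (D.card : ℝ)))} with hA
  have hfin : A.Finite := (Set.finite_range fun D : Finset (Fin n) =>
    expCount n p D * hFun (lam - 1) /
      ((D.card : ℝ) * Real.log ((n : ℝ) / (D.card : ℝ)))).subset (by
    rintro x ⟨D, _, _, rfl⟩
    exact ⟨D, rfl⟩)
  have hne : A.Nonempty :=
    ⟨_, C, Finset.Subset.refl _, Finset.card_pos.1 (by omega), rfl⟩
  obtain ⟨D, hDC, hDne, hD⟩ := hne.csSup_mem hfin
  rw [hD] at hcond
  have hk1 : 1 ≤ D.card := Finset.card_pos.2 hDne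
  have hkr : D.card ≤ r := hC ▸ Finset.card_le_card hDC
  have hk0 : (0 : ℝ) < D.card := by exact_mod_cast hk1
  have hlog := (R.log_div hk1 hkr).1
  have hlog1 := R.log_one
  have hLpos : 0 < (D.card : ℝ) * Real.log ((n : ℝ) / D.card) := by
    have : 0 < Real.log ((n : ℝ) / D.card) := by linarith
    positivity
  rw [le_div_iff₀ hLpos] at hcond
  rcases le_or_gt ((r : ℝ) ^ ((1 : ℝ) / 3)) D.card with hbig | hsmall
  · exact ⟨D, hDC, hbig, hkr, hcond⟩
  · refine ⟨C, Finset.Subset.refl _, hrC, hC.le, ?_⟩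
    have hμC := R.expCount_ge' hp hrC
    have hsC := wt_ge R.a_le C
    rw [hC] at hsC ⊢
    have ha := R.a_pos
    have hb := R.a_pos.trans_le R.a_le_b
    have hn := R.four_le
    have hR3 : ((r : ℝ) ^ ((1 : ℝ) / 3)) ^ 3 = r := by
      rw [← Real.rpow_natCast, ← Real.rpow_mul (by positivity)]; norm_num
    have hba := R.b_le_a
    set ρ := (r : ℝ) ^ ((1 : ℝ) / 3) with hρ
    have hρ0 : 0 ≤ ρ := by positivity
    have hμD : expCount n p D ≤ (D.card * b) ^ 2 / 2 := by
      refine (expCount_le hp D).trans ?_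
      have := wt_le R.le_b D
      have := R.wt_nonneg D
      gcongr
    have hlogmono : Real.log ((n : ℝ) / r) ≤ Real.log ((n : ℝ) / D.card) := by
      apply Real.log_le_log (by positivity)
      gcongr
    have h1 : (1 + ε) * Real.log ((n : ℝ) / r) ≤ ρ * b ^ 2 / 2 * hFun (lam - 1) := by
      have h2 : D.card * ((1 + ε) * Real.log ((n : ℝ) / r)) ≤
          D.card * (D.card * b ^ 2 / 2 * hFun (lam - 1)) := by
        calc D.card * ((1 + ε) * Real.log ((n : ℝ) / r))
            = (1 + ε) * (D.card * Real.log ((n : ℝ) / r)) := by ring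
          _ ≤ (1 + ε) * (D.card * Real.log ((n : ℝ) / D.card)) := by gcongr
          _ ≤ expCount n p D * hFun (lam - 1) := hcond
          _ ≤ (D.card * b) ^ 2 / 2 * hFun (lam - 1) := by gcongr
          _ = _ := by ring
      refine (le_of_mul_le_mul_left h2 hk0).trans ?_
      gcongr
    have h3 : ρ * b ^ 2 ≤ 3 / 4 * (r * a ^ 2) := by
      have hκ1 : κ ^ 2 ≤ 3 / 4 := by
        have := R.kappa_pos
        have := R.kappa_le
        nlinarith
      calc ρ * b ^ 2 ≤ ρ * (κ * a * ρ) ^ 2 := by gcongr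
        _ = κ ^ 2 * (ρ ^ 3 * a ^ 2) := by ring
        _ ≤ 3 / 4 * (r * a ^ 2) := by rw [hR3]; gcongr
    calc (1 + ε) * (r * Real.log ((n : ℝ) / r)) = r * ((1 + ε) * Real.log ((n : ℝ) / r)) := by ring
      _ ≤ r * (ρ * b ^ 2 / 2 * hFun (lam - 1)) := by gcongr
      _ = r * (ρ * b ^ 2) / 2 * hFun (lam - 1) := by ring
      _ ≤ r * (3 / 4 * (r * a ^ 2)) / 2 * hFun (lam - 1) := by gcongr
      _ = 3 / 8 * (r * a) ^ 2 * hFun (lam - 1) := by ring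
      _ ≤ 3 / 8 * wt θ C ^ 2 * hFun (lam - 1) := by gcongr
      _ ≤ expCount n p C * hFun (lam - 1) := by gcongr

/-- Under the alternative the mean of `e(D, -D)` is inflated only through the edges joining `D` to
the rest of the community. -/
lemma sum_alt_cross (hp : ∀ i j, p i j = θ i * θ j) {lam : ℝ}
    {C D : Finset (Fin n)} (hDC : D ⊆ C) :
    ∑ e ∈ betweenE D Dᶜ, altW n p lam C e =
      wt θ D * (wt θ Finset.univ - wt θ D) + (lam - 1) * (wt θ D * wt θ (C \ D)) := by
  rw [← sum_null_cross hp D, ← sum_between θ Finset.disjoint_sdiff, Finset.mul_sum]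
  have hb : betweenE D (C \ D) =
      (betweenE D Dᶜ).filter fun e => e.1.1 ∈ C ∧ e.1.2 ∈ C := by
    ext e
    simp only [betweenE, Finset.mem_filter, Finset.mem_univ, true_and, Finset.mem_sdiff,
      Finset.mem_compl]
    constructor
    · rintro (⟨h1, h2, h3⟩ | ⟨⟨h1, h2⟩, h3⟩)
      · exact ⟨Or.inl ⟨h1, h3⟩, hDC h1, h2⟩
      · exact ⟨Or.inr ⟨h2, h3⟩, h1, hDC h3⟩
    · rintro ⟨⟨h1, h2⟩ | ⟨h1, h2⟩, h3, h4⟩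
      · exact Or.inl ⟨h1, h4, h2⟩
      · exact Or.inr ⟨⟨h3, h1⟩, h2⟩
  rw [hb, Finset.sum_filter, ← Finset.sum_add_distrib]
  refine Finset.sum_congr rfl fun e _ => ?_
  rw [altW, nullW]
  split_ifs
  · rw [hp]; ring
  · ring

lemma sum_alt_inside {lam : ℝ} {C D : Finset (Fin n)} (hDC : D ⊆ C) :
    ∑ e ∈ insideE D, altW n p lam C e = lam * expCount n p D := by
  rw [expCount_eq, Finset.mul_sum]
  refine Finset.sum_congr rfl fun e he => ?_
  obtain ⟨h1, h2⟩ := (Finset.mem_filter.1 he).2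
  rw [altW, nullW, if_pos ⟨hDC h1, hDC h2⟩]

lemma Regime.altW_mem (R : Regime n r θ a b η κ) (hp : ∀ i j, p i j = θ i * θ j)
    {C : Finset (Fin n)} {lam : ℝ} (hlam : 1 ≤ lam)
    (hlamp : ∀ i ∈ C, ∀ j ∈ C, lam * p i j ≤ 1) (e : Edge n) :
    nullW n p e ≤ altW n p lam C e ∧ 0 ≤ altW n p lam C e ∧ altW n p lam C e ≤ 1 := by
  have h := R.nullW_mem hp e
  have h2 : nullW n p e ≤ altW n p lam C e := by
    rw [altW]
    split_ifs
    · have : 0 ≤ p e.1.1 e.1.2 := h.1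
      rw [nullW]
      nlinarith
    · exact le_rfl
  refine ⟨h2, h.1.trans h2, ?_⟩
  rw [altW]
  split_ifs with hc
  · exact hlamp _ hc.1 _ hc.2
  · exact h.2

/-- Under the alternative, `(1 + y) h(y) ≤ 2 y² log n` for `y = λ - 1`, so the expected excess of
`e(D)` squared over its variance is of order at least `|D|`. -/
lemma signal_strength {μ L ℓ k ε y : ℝ} (hμ : 0 < μ) (hε : 0 < ε) (hL : 0 < L) (hℓ : 1 ≤ ℓ)
    (hkL : k * (ℓ / 2) ≤ L) (hy : 0 ≤ y) (hyℓ : Real.log (1 + y) ≤ ℓ)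
    (hsig : (1 + ε) * L ≤ μ * hFun y) : k / 4 ≤ y ^ 2 * μ / (1 + y) := by
  have h1 : (1 + y) * hFun y ≤ 2 * ℓ * y ^ 2 := by
    rcases le_total y 1 with h | h
    · have h2 := hFun_le_sq hy
      calc (1 + y) * hFun y ≤ (1 + 1) * y ^ 2 := by gcongr; exact hFun_nonneg hy
        _ ≤ 2 * ℓ * y ^ 2 := by nlinarith [sq_nonneg y]
    · have h2 := hFun_le_mul_log hy
      have h3 : hFun y ≤ y * ℓ := h2.trans (by gcongr)
      calc (1 + y) * hFun y ≤ (y + y) * (y * ℓ) := by gcongr; exact hFun_nonneg hy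
        _ = 2 * ℓ * y ^ 2 := by ring
  rw [le_div_iff₀ (by linarith)]
  have h4 : k * (ℓ / 2) ≤ μ * hFun y := by nlinarith
  have h5 : k * (ℓ / 2) * (1 + y) ≤ μ * (2 * ℓ * y ^ 2) := by
    calc k * (ℓ / 2) * (1 + y) ≤ μ * hFun y * (1 + y) := by gcongr
      _ = μ * ((1 + y) * hFun y) := by ring
      _ ≤ _ := by gcongr
  nlinarith

/-- The truncation level of the estimator is below `E₀[e(D)]`. -/
lemma Regime.truncation_le (R : Regime n r θ a b η κ) (hp : ∀ i j, p i j = θ i * θ j)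
    {D : Finset (Fin n)} (hD : (r : ℝ) ^ ((1 : ℝ) / 3) ≤ D.card) (hDr : D.card ≤ r) :
    (D.card : ℝ) ^ 2 / n * Real.log ((n : ℝ) / D.card) ^ 4 ≤ expCount n p D := by
  have hn := R.four_le
  have hn0 : (n : ℝ) ≠ 0 := by linarith
  have ha := R.a_pos
  have hthr := R.thr
  obtain ⟨hlog, hlog'⟩ := R.log_div (R.card_pos hD) hDr
  have hℓ := R.log_one
  have hks := wt_ge R.a_le D
  have hμ8 := R.expCount_ge' hp hD
  have h1 : Real.log ((n : ℝ) / D.card) ^ 4 ≤ Real.log n ^ 4 :=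
    pow_le_pow_left₀ (by linarith) hlog' 4
  calc (D.card : ℝ) ^ 2 / n * Real.log ((n : ℝ) / D.card) ^ 4
      ≤ (D.card : ℝ) ^ 2 / n * (n * a ^ 2 / 4) :=
        mul_le_mul_of_nonneg_left (by linarith) (by positivity)
    _ = (D.card * a) ^ 2 / 4 := by field_simp
    _ ≤ wt θ D ^ 2 / 4 := by gcongr
    _ ≤ expCount n p D := by nlinarith [sq_nonneg (wt θ D)]

set_option maxHeartbeats 800000 in
/-- On the event that the edge counts `e(V)`, `e(D, -D)` are typical under the alternative, the
thresholded estimator overshoots `E₀[e(D)]` by a relative error at most `62 κ min(1, λ - 1)`. -/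
lemma Regime.est_alt (R : Regime n r θ a b η κ) (hp : ∀ i j, p i j = θ i * θ j)
    (hε : 0 < ε) {D : Finset (Fin n)} (hD : (r : ℝ) ^ ((1 : ℝ) / 3) ≤ D.card) (hDr : D.card ≤ r)
    {y z : ℝ} (hy : 0 ≤ y) (hz : 0 ≤ z) (hz1 : z ≤ κ) (hzy : z ≤ κ * y)
    (hsig : (1 + ε) * ((D.card : ℝ) * Real.log ((n : ℝ) / D.card)) ≤ expCount n p D * hFun y)
    {c : Config n}
    (hX : (1 - η) * ((1 - η) * (wt θ Finset.univ ^ 2 / 2)) ≤ eCount n Finset.univ c)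
    (hY : eCross n D c ≤ (1 + η) * (wt θ D * wt θ Finset.univ * (1 + z))) :
    estCountTr n D c ≤ expCount n p D * (1 + 62 * κ * min 1 y) := by
  have hL := R.L_pos hD hDr
  have hμ := R.expCount_pos hp hD
  have h2 := R.eta_expCount_le hp hD hDr
  have hk1 := R.card_pos hD
  have hk1' : (1 : ℝ) ≤ D.card := by exact_mod_cast hk1
  obtain ⟨hlog, hlog'⟩ := R.log_div hk1 hDr
  have hℓ := R.log_one
  have hκ0 := R.kappa_pos
  have hκ1 := R.kappa_le
  have hη0 := R.eta_pos
  have hs := R.wt_pos hD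
  have hks := wt_ge R.a_le D
  have hμ8 := R.expCount_ge' hp hD
  have hμ2 := R.expCount_ge hp D
  have hbs := R.b_le_wt hD
  have hLk : (D.card : ℝ) * (Real.log n / 2) ≤ D.card * Real.log ((n : ℝ) / D.card) := by gcongr
  set L := (D.card : ℝ) * Real.log ((n : ℝ) / D.card) with hLdef
  set μ := expCount n p D with hμdef
  set s := wt θ D with hsdef
  have hLy : L ≤ μ * y ^ 2 := by
    have h3 : μ * hFun y ≤ μ * y ^ 2 := by gcongr; exact hFun_le_sq hy
    nlinarith
  have hηy : η ≤ κ * y := by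
    refine le_of_sq_le_sq ?_ (by positivity)
    have h3 : η ^ 2 * μ ≤ (κ * y) ^ 2 * μ := by
      calc η ^ 2 * μ ≤ κ ^ 2 * L := h2
        _ ≤ κ ^ 2 * (μ * y ^ 2) := by gcongr
        _ = _ := by ring
    exact le_of_mul_le_mul_right h3 hμ
  have hM0 : 0 ≤ min 1 y := le_min zero_le_one hy
  have hM1 : min 1 y ≤ 1 := min_le_left _ _
  have hηM : η ≤ κ * min 1 y := by
    rw [mul_min_of_nonneg _ _ hκ0.le, mul_one]; exact le_min R.eta_le hηy
  have hzM : z ≤ κ * min 1 y := by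
    rw [mul_min_of_nonneg _ _ hκ0.le, mul_one]; exact le_min hz1 hzy
  have hbM : b * s / 2 ≤ μ * (2 * (κ * min 1 y)) := by
    have h3 : b * s / 2 ≤ 2 * κ * μ := by nlinarith
    have h4 : b * s / 2 ≤ 2 * κ * y * μ := by
      refine le_of_sq_le_sq ?_ (by positivity)
      have h5 : 1 ≤ κ ^ 2 * (μ * y ^ 2) := by
        calc 1 ≤ κ ^ 2 * (1 * (Real.log n / 2)) := by have := R.log_ge; linarith
          _ ≤ κ ^ 2 * ((D.card : ℝ) * (Real.log n / 2)) := by gcongr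
          _ ≤ κ ^ 2 * (μ * y ^ 2) := by exact mul_le_mul_of_nonneg_left (hLk.trans hLy) (sq_nonneg κ)
      have h6 : b ^ 2 ≤ 1 := pow_le_one₀ (R.a_pos.le.trans R.a_le_b) R.b_le
      calc (b * s / 2) ^ 2 = b ^ 2 * s ^ 2 / 4 := by ring
        _ ≤ 1 * s ^ 2 / 4 := by gcongr
        _ ≤ 4 * μ * 1 := by nlinarith
        _ ≤ 4 * μ * (κ ^ 2 * (μ * y ^ 2)) := by gcongr
        _ = _ := by ring
    rcases le_total 1 y with h | h
    · rw [min_eq_left h]; linarith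
    · rw [min_eq_right h]; linarith
  set M := min 1 y with hM
  refine max_le ?_ ?_
  · have hY0 : 0 ≤ eCross n D c := by rw [eCross_eq]; exact cnt_nonneg _ _ _
    have h3 := est_le hη0.le hz (by have := R.eta_le; linarith) hs R.S_pos (R.wt_le_share hDr)
      hY0 hX hY
    have hκM : κ * M ≤ 1 / 1200 := (mul_le_of_le_one_right hκ0.le hM1).trans hκ1
    have hκM0 : 0 ≤ κ * M := by positivity
    calc estCount n D c ≤ (1 + 20 * (η + z)) * (s ^ 2 / 2) := h3
      _ ≤ (1 + 40 * (κ * M)) * (μ * (1 + 2 * (κ * M))) := by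
        refine mul_le_mul (by linarith) (by linarith) (by positivity) (by linarith)
      _ = μ * ((1 + 40 * (κ * M)) * (1 + 2 * (κ * M))) := by ring
      _ ≤ μ * (1 + 62 * κ * M) := by
        refine mul_le_mul_of_nonneg_left ?_ hμ.le
        have h4 : κ * M * (κ * M) ≤ 1 / 1200 * (κ * M) := mul_le_mul_of_nonneg_right hκM hκM0
        linarith [show (1 + 40 * (κ * M)) * (1 + 2 * (κ * M)) =
          1 + 42 * (κ * M) + 80 * (κ * M * (κ * M)) by ring]
  · refine (R.truncation_le hp hD hDr).trans ?_
    have h4 : 0 ≤ μ * (62 * (κ * M)) := by positivity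
    linarith [show μ * (1 + 62 * κ * M) = μ + μ * (62 * (κ * M)) by ring]

set_option maxHeartbeats 1600000 in
/-- The statistic at the witness `D` exceeds the threshold unless `e(D)` falls below its mean by
the factor `1 - ζ y / (1 + y)`, or `e(V)` or `e(D, -D)` is atypical. -/
lemma Regime.typeII (R : Regime n r θ a b η κ) (hp : ∀ i j, p i j = θ i * θ j)
    (hε : 0 < ε) (hκ : 1200 * (κ * (1 + ε)) ≤ ε) {ζ : ℝ} (hζ : ζ = ε / (6 * (1 + ε)))
    {C : Finset (Fin n)} (hC : C.card = r) {lam : ℝ} (hlam : 1 ≤ lam)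
    (hlamp : ∀ i ∈ C, ∀ j ∈ C, lam * p i j ≤ 1) (hcond : 1 + ε ≤ condSup n p lam C) :
    prob n (altW n p lam C) {c | scanTestU n r ε c = false} ≤
      Real.exp (-(ζ ^ 2 * (r : ℝ) ^ ((1 : ℝ) / 3) / 8)) + 1 / n + 1 / n := by
  classical
  obtain ⟨D, hDC, hD, hDr, hsig⟩ := R.exists_large hp hC hlam hε hcond
  have hn := R.four_le
  have hn0 : (0 : ℝ) < n := by linarith
  have ha := R.a_pos
  have hb : 0 < b := ha.trans_le R.a_le_b
  have hκ0 := R.kappa_pos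
  have hκ1 := R.kappa_le
  have hη0 := R.eta_pos
  have hηκ := R.eta_le
  have hr0 : (0 : ℝ) < r := by exact_mod_cast (lt_of_lt_of_le two_pos R.two_le)
  have hℓ := R.log_one
  have hμ := R.expCount_pos hp hD
  have hL := R.L_pos hD hDr
  have hs := R.wt_pos hD
  have hS := R.S_pos
  have hSn := R.S_ge
  have hk1 := R.card_pos hD
  have hk1' : (1 : ℝ) ≤ D.card := by exact_mod_cast hk1
  have hLk : (D.card : ℝ) * (Real.log n / 2) ≤ D.card * Real.log ((n : ℝ) / D.card) := by
    gcongr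
    exact (R.log_div hk1 hDr).1
  have hw : ∀ e, 0 ≤ altW n p lam C e ∧ altW n p lam C e ≤ 1 :=
    fun e => (R.altW_mem hp hlam hlamp e).2
  have hnull : ∀ e, nullW n p e ≤ altW n p lam C e := fun e => (R.altW_mem hp hlam hlamp e).1
  have hζ0 : 0 < ζ := by rw [hζ]; positivity
  have hζ1 : ζ < 1 := by rw [hζ, div_lt_one (by positivity)]; linarith
  set y := lam - 1 with hydef
  have hlamy : lam = 1 + y := by rw [hydef]; ring
  have hy : 0 ≤ y := by rw [hydef]; linarith
  have hlama : lam * a ^ 2 ≤ 1 := by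
    obtain ⟨i, hi⟩ : C.Nonempty := Finset.card_pos.1 (by have := R.two_le; omega)
    refine le_trans ?_ (hlamp i hi i hi)
    rw [hp, sq]
    exact mul_le_mul_of_nonneg_left
      (mul_le_mul (R.a_le i) (R.a_le i) ha.le (R.theta_pos i).le) (by linarith)
  have hya : y * a ^ 2 ≤ 1 := by rw [hlamy] at hlama; nlinarith [sq_nonneg a]
  have hlog4 : 1 ≤ Real.log n ^ 4 := one_le_pow₀ hℓ
  have hyn : 1 + y ≤ n := by
    rw [← hlamy]
    have hna : 1 ≤ n * a ^ 2 := by have := R.thr; linarith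
    have : lam * a ^ 2 ≤ n * a ^ 2 := hlama.trans hna
    exact le_of_mul_le_mul_right this (by positivity)
  have hylog : Real.log (1 + y) ≤ Real.log n := Real.log_le_log (by linarith) hyn
  set z := y * (r * b) / (n * a) with hzdef
  have hz : 0 ≤ z := by positivity
  have hzna : y * (r * b) = z * (n * a) := by rw [hzdef]; field_simp
  have hz1 : z ≤ κ := by
    rw [hzdef, div_le_iff₀ (by positivity)]
    calc y * (r * b) ≤ y * (κ * (n * a ^ 3)) := by exact mul_le_mul_of_nonneg_left R.share_cube hy
      _ = y * a ^ 2 * (κ * (n * a)) := by ring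
      _ ≤ 1 * (κ * (n * a)) := by gcongr
      _ = _ := by ring
  have hzy : z ≤ κ * y := by
    rw [hzdef, div_le_iff₀ (by positivity)]
    calc y * (r * b) ≤ y * (η * (n * a)) := by exact mul_le_mul_of_nonneg_left R.share hy
      _ ≤ y * (κ * (n * a)) := by gcongr
      _ = _ := by ring
  set S := wt θ Finset.univ with hSdef
  set s := wt θ D with hsdef
  set μ := expCount n p D with hμdef
  have hη1 : η < 1 := by linarith
  -- The three exceptional events: `e(D)` too small, `e(V)` too small, `e(D, -D)` too large.
  set x := ζ * y / (1 + y) with hxdef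
  have hx0 : 0 ≤ x := by positivity
  have hx1 : x < 1 := by rw [hxdef, div_lt_one (by linarith)]; nlinarith
  set BE : Set (Config n) := {c | cnt n (insideE D) c < (1 - x) * (lam * μ)}
  set BX : Set (Config n) :=
    {c | cnt n (insideE Finset.univ) c < (1 - η) * ((1 - η) * (S ^ 2 / 2))}
  set BY : Set (Config n) := {c | (1 + η) * (s * S * (1 + z)) < cnt n (betweenE D Dᶜ) c}
  have hsub : {c | scanTestU n r ε c = false} ⊆ (BE ∪ BX) ∪ BY := by
    intro c hc
    by_contra hcon
    simp only [Set.mem_union, not_or] at hcon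
    obtain ⟨⟨hE, hX⟩, hY⟩ := hcon
    have hE' : (1 - x) * (lam * μ) ≤ eCount n D c := by rw [eCount_eq]; exact not_lt.1 hE
    have hX' : (1 - η) * ((1 - η) * (S ^ 2 / 2)) ≤ eCount n Finset.univ c := by
      rw [eCount_eq]; exact not_lt.1 hX
    have hY' : eCross n D c ≤ (1 + η) * (s * S * (1 + z)) := by rw [eCross_eq]; exact not_lt.1 hY
    have hT := R.est_alt hp hε hD hDr hy hz hz1 hzy hsig hX' hY'
    have hT0 : 0 < estCountTr n D c := by
      refine lt_of_lt_of_le ?_ (le_max_right _ _)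
      have : 0 < Real.log ((n : ℝ) / D.card) := by have := (R.log_div hk1 hDr).1; linarith
      exact mul_pos (div_pos (pow_pos (by linarith) 2) hn0) (pow_pos this 4)
    have hE2 : μ * (1 + (1 - ζ) * y) ≤ eCount n D c := by
      refine le_trans (le_of_eq ?_) hE'
      rw [hlamy, hxdef]
      field_simp
      ring
    have hgain := typeII_gain hμ hε hκ0 hκ hζ hy hT0 hT hE2 hsig
    have hstat : 1 + ε / 3 ≤ scanStatU n D c := by
      rw [scanStatU, le_div_iff₀ hL]; exact hgain
    have htest : scanTestU n r ε c = true := by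
      rw [scanTestU, if_pos]
      refine hstat.trans (le_csSup ?_ ⟨D, hD, hDr, rfl⟩)
      refine Set.Finite.bddAbove ((Set.finite_range fun D => scanStatU n D c).subset ?_)
      rintro x ⟨D, _, _, rfl⟩
      exact ⟨D, rfl⟩
    have hc' : scanTestU n r ε c = false := hc
    rw [htest] at hc'
    exact absurd hc' (by decide)
  have hexp : Real.exp (-Real.log n) = 1 / n := by
    rw [Real.exp_neg, Real.exp_log hn0, one_div]
  have hηna : n * (8 * Real.log n) ≤ η ^ 2 * S ^ 2 := by
    calc n * (8 * Real.log n) ≤ n * (η ^ 2 * (n * a ^ 2)) := by exact mul_le_mul_of_nonneg_left R.eta_log hn0.le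
      _ = η ^ 2 * (n * a) ^ 2 := by ring
      _ ≤ η ^ 2 * S ^ 2 := by gcongr
  have hPE : prob n (altW n p lam C) BE ≤
      Real.exp (-(ζ ^ 2 * (r : ℝ) ^ ((1 : ℝ) / 3) / 8)) := by
    refine (lower_tail hw (insideE D) hx0 hx1 (by positivity)
      (sum_alt_inside hDC).ge).trans ?_
    apply Real.exp_le_exp.2
    have h1 := signal_strength hμ hε hL hℓ hLk hy hylog hsig
    have h2 : x ^ 2 * (lam * μ) / 2 = ζ ^ 2 / 2 * (y ^ 2 * μ / (1 + y)) := by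
      rw [hxdef, hlamy]
      field_simp
    rw [h2]
    have h3 : ζ ^ 2 / 2 * (D.card / 4) ≤ ζ ^ 2 / 2 * (y ^ 2 * μ / (1 + y)) := by gcongr
    have h4 : ζ ^ 2 * (r : ℝ) ^ ((1 : ℝ) / 3) ≤ ζ ^ 2 * D.card := by gcongr
    linarith
  have hPX : prob n (altW n p lam C) BX ≤ 1 / n := by
    have hm : (1 - η) * (S ^ 2 / 2) ≤ ∑ e ∈ insideE Finset.univ, altW n p lam C e := by
      refine le_trans ?_ (Finset.sum_le_sum fun e _ => hnull e)
      rw [← expCount_eq]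
      have h1 := R.expCount_ge hp Finset.univ
      have h2 : b ≤ η * S := by
        have hr1 : (1 : ℝ) ≤ r := by exact_mod_cast (le_trans one_le_two R.two_le)
        calc b ≤ r * b := le_mul_of_one_le_left hb.le hr1
          _ ≤ η * (n * a) := R.share
          _ ≤ η * S := by gcongr
      have h3 : b * S ≤ η * S * S := mul_le_mul_of_nonneg_right h2 hS.le
      linarith [show (1 - η) * (S ^ 2 / 2) = S ^ 2 / 2 - η * S * S / 2 by ring]
    refine (lower_tail hw (insideE Finset.univ) hη0.le hη1
      (mul_nonneg (by linarith) (by positivity)) hm).trans ?_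
    rw [← hexp]
    apply Real.exp_le_exp.2
    have h2 : (1 / 2 : ℝ) * (η ^ 2 * S ^ 2) ≤ (1 - η) * (η ^ 2 * S ^ 2) :=
      mul_le_mul_of_nonneg_right (by linarith) (by positivity)
    have h3 : 4 * Real.log n ≤ n * Real.log n := mul_le_mul_of_nonneg_right hn (by linarith)
    linarith [show η ^ 2 * ((1 - η) * (S ^ 2 / 2)) / 2 = (1 - η) * (η ^ 2 * S ^ 2) / 4 by ring]
  have hPY : prob n (altW n p lam C) BY ≤ 1 / n := by
    have hU : ∑ e ∈ betweenE D Dᶜ, altW n p lam C e ≤ s * S * (1 + z) := by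
      rw [sum_alt_cross hp hDC]
      have h1 : wt θ (C \ D) ≤ r * b := by
        refine (wt_le R.le_b _).trans ?_
        have : (C \ D).card ≤ r := hC ▸ Finset.card_le_card Finset.sdiff_subset
        gcongr
      have h2 : y * (s * wt θ (C \ D)) ≤ s * S * z := by
        calc y * (s * wt θ (C \ D)) ≤ y * (s * (r * b)) := by gcongr
          _ = s * (z * (n * a)) := by rw [← hzna]; ring
          _ ≤ s * (z * S) := by gcongr
          _ = _ := by ring
      linarith [show s * (S - s) = s * S - s ^ 2 by ring, sq_nonneg s,
        show s * S * (1 + z) = s * S + s * S * z by ring]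
    refine (upper_tail hw (betweenE D Dᶜ) hη0.le hη1.le (by positivity) hU).trans ?_
    rw [← hexp]
    apply Real.exp_le_exp.2
    have h1 : a ≤ s := by
      refine le_trans ?_ (wt_ge R.a_le D)
      exact le_mul_of_one_le_left ha.le hk1'
    have h2 : 8 * Real.log n ≤ η ^ 2 * (s * S * (1 + z)) := by
      calc 8 * Real.log n ≤ η ^ 2 * (n * a ^ 2) := R.eta_log
        _ = η ^ 2 * (a * (n * a) * 1) := by ring
        _ ≤ η ^ 2 * (s * S * (1 + z)) := by
          refine mul_le_mul_of_nonneg_left ?_ (sq_nonneg η)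
          exact mul_le_mul (mul_le_mul h1 hSn (by positivity) hs.le) (by linarith) zero_le_one
            (mul_pos hs hS).le
    linarith
  refine (prob_mono hw hsub).trans ((prob_union_le hw _ _).trans ?_)
  exact add_le_add ((prob_union_le hw _ _).trans (add_le_add hPE hPX)) hPY

end TypeII

/-! ### Asymptotics -/

/-- With `a`, `b` the extreme weights, the relative accuracy `η` is the larger of the fluctuation
scale `√(8 log n / (n a²))` and the largest possible share of a set of size `r` in the total
weight. -/
lemma Regime.of_ratio {n r : ℕ} {θ : Fin n → ℝ} {a b κ : ℝ} (ha : 0 < a) (hab : a ≤ b)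
    (hb : b ≤ 1) (haθ : ∀ i, a ≤ θ i) (hθb : ∀ i, θ i ≤ b) (hr : 2 ≤ r) (hrn : (r : ℝ) ^ 2 ≤ n)
    (hκ : 0 < κ) (hκ1 : κ ≤ 1 / 1200) (hlog : 2 ≤ κ ^ 2 * Real.log n)
    (h1 : (b / a) ^ 2 ≤ κ ^ 2 * (r : ℝ) ^ ((2 : ℝ) / 3))
    (h2 : (b / a) ^ 2 ≤ κ ^ 2 / 8 * ((n : ℝ) / r * a ^ 2))
    (hω : 8 * Real.log n ≤ κ ^ 2 * (n * a ^ 2)) (hthr : 4 * Real.log n ^ 4 ≤ n * a ^ 2) :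
    Regime n r θ a b (max (Real.sqrt (8 * Real.log n / (n * a ^ 2))) (r * b / (n * a))) κ := by
  have hr0 : (0 : ℝ) < r := by exact_mod_cast (lt_of_lt_of_le two_pos hr)
  have hn0 : (0 : ℝ) < n := by nlinarith
  have hκ2 : κ ^ 2 ≤ κ := by nlinarith
  have hℓ : 1 ≤ Real.log n := by
    by_contra! h
    nlinarith [sq_nonneg κ]
  set t := b / a with ht
  have hbt : b = t * a := by rw [ht]; field_simp
  have ht1 : 1 ≤ t := by rw [ht, one_le_div ha]; exact hab
  have htt : t ≤ t ^ 2 := by nlinarith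
  have ha1 : a ≤ 1 := hab.trans hb
  have ha2 : a ^ 2 ≤ 1 := pow_le_one₀ ha.le ha1
  have h2' : r * t ^ 2 ≤ κ ^ 2 / 8 * (n * a ^ 2) := by
    calc r * t ^ 2 ≤ r * (κ ^ 2 / 8 * ((n : ℝ) / r * a ^ 2)) := by gcongr
      _ = _ := by field_simp
  set β := r * b / (n * a) with hβ
  have hβna : β * (n * a) = r * b := by rw [hβ]; field_simp
  have hβn : β * n = r * t := by rw [hβ, hbt]; field_simp
  have hβ0 : 0 < β := by have : 0 < b := ha.trans_le hab; positivity
  have hω0 : 0 < n * a ^ 2 := by positivity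
  set σ := Real.sqrt (8 * Real.log n / (n * a ^ 2)) with hσ
  have hσ0 : 0 ≤ σ := Real.sqrt_nonneg _
  have hσ2 : σ ^ 2 * (n * a ^ 2) = 8 * Real.log n := by
    rw [hσ, Real.sq_sqrt (by positivity)]; field_simp
  have hβsmall : β ≤ κ ^ 2 / 8 := by
    have : β * n ≤ κ ^ 2 / 8 * n := by
      calc β * n = r * t := hβn
        _ ≤ r * t ^ 2 := by gcongr
        _ ≤ κ ^ 2 / 8 * (n * a ^ 2) := h2'
        _ ≤ κ ^ 2 / 8 * (n * 1) := by gcongr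
        _ = _ := by ring
    exact le_of_mul_le_mul_right this hn0
  refine ⟨ha, haθ, hθb, hb, hab, hr, hrn, hκ, hκ1, hlog, lt_max_of_lt_right hβ0, max_le ?_ ?_,
    ?_, ?_, ?_, ?_, ?_, hthr⟩
  · rw [hσ]
    refine Real.sqrt_le_iff.2 ⟨hκ.le, ?_⟩
    rw [div_le_iff₀ hω0]
    exact hω
  · linarith
  · rw [← hβna]
    gcongr
    exact le_max_right _ _
  · rw [← hσ2]
    gcongr
    exact le_max_left _ _
  · rcases max_choice σ β with h | h <;> rw [h]
    · have : σ ^ 2 * (r * b ^ 2) * n ≤ κ ^ 2 * Real.log n * n := by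
        calc σ ^ 2 * (r * b ^ 2) * n = σ ^ 2 * (n * a ^ 2) * (r * t ^ 2) := by rw [hbt]; ring
          _ = 8 * Real.log n * (r * t ^ 2) := by rw [hσ2]
          _ ≤ 8 * Real.log n * (κ ^ 2 / 8 * (n * 1)) := by
            refine mul_le_mul_of_nonneg_left (h2'.trans ?_) (by linarith)
            gcongr
          _ = _ := by ring
      exact le_of_mul_le_mul_right this hn0
    · have : β ^ 2 * (r * b ^ 2) * n ^ 2 ≤ κ ^ 2 * Real.log n * n ^ 2 := by
        calc β ^ 2 * (r * b ^ 2) * n ^ 2 = (β * n) ^ 2 * (r * b ^ 2) := by ring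
          _ = (r : ℝ) ^ 2 * (r * t ^ 2) * b ^ 2 := by rw [hβn]; ring
          _ ≤ n * (κ ^ 2 / 8 * (n * a ^ 2)) * 1 := by
            gcongr
            exact pow_le_one₀ (ha.le.trans hab) hb
          _ ≤ n * (κ ^ 2 / 8 * (n * 1)) * 1 := by gcongr
          _ = κ ^ 2 * (1 / 8) * n ^ 2 := by ring
          _ ≤ κ ^ 2 * Real.log n * n ^ 2 := by gcongr; linarith
      exact le_of_mul_le_mul_right this (by positivity)
  · calc r * b = r * t * a := by rw [hbt]; ring
      _ ≤ r * t ^ 2 * a := by gcongr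
      _ ≤ κ ^ 2 / 8 * (n * a ^ 2) * a := by gcongr
      _ = κ ^ 2 / 8 * (n * a ^ 3) := by ring
      _ ≤ κ * (n * a ^ 3) := by gcongr; linarith
  · have h3 : t ≤ κ * (r : ℝ) ^ ((1 : ℝ) / 3) := by
      refine le_of_sq_le_sq ?_ (by positivity)
      refine h1.trans (le_of_eq ?_)
      rw [mul_pow, ← Real.rpow_natCast ((r : ℝ) ^ ((1 : ℝ) / 3)), ← Real.rpow_mul hr0.le]
      norm_num
    calc b = t * a := hbt
      _ ≤ κ * (r : ℝ) ^ ((1 : ℝ) / 3) * a := by gcongr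
      _ = _ := by ring

lemma pbar_le {n r : ℕ} {θ : Fin n → ℝ} {p : Fin n → Fin n → ℝ} {b : ℝ} (hr : 2 ≤ r)
    (hp : ∀ i j, p i j = θ i * θ j) (h0 : ∀ i, 0 < θ i) (hb : ∀ i, θ i ≤ b)
    {C : Finset (Fin n)} (hC : C.card = r) : pbar n p C ≤ 2 * b ^ 2 := by
  have hr2 : (2 : ℝ) ≤ r := by exact_mod_cast hr
  rw [pbar, hC, Nat.cast_choose_two, div_le_iff₀ (by nlinarith)]
  have h1 : expCount n p C ≤ (r * b) ^ 2 / 2 := by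
    refine (expCount_le hp C).trans ?_
    have h2 := wt_le hb C
    rw [hC] at h2
    have : 0 ≤ wt θ C := Finset.sum_nonneg fun i _ => (h0 i).le
    gcongr
  have h3 : (r : ℝ) ^ 2 ≤ 2 * (r * (r - 1)) := by nlinarith
  nlinarith [mul_le_mul_of_nonneg_right h3 (sq_nonneg b)]

lemma pbar_pos {n r : ℕ} {θ : Fin n → ℝ} {p : Fin n → Fin n → ℝ} (hr : 2 ≤ r)
    (hp : ∀ i j, p i j = θ i * θ j) (h0 : ∀ i, 0 < θ i)
    {C : Finset (Fin n)} (hC : C.card = r) : 0 < pbar n p C := by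
  have hr2 : (2 : ℝ) ≤ r := by exact_mod_cast hr
  rw [pbar, hC, Nat.cast_choose_two]
  refine div_pos ?_ (by nlinarith)
  obtain ⟨i, hi, j, hj, hij⟩ := Finset.one_lt_card.1 (show 1 < C.card by omega)
  have key : ∀ i ∈ C, ∀ j ∈ C, i < j → 0 < expCount n p C := by
    intro i hi j hj hij
    refine Finset.sum_pos' (fun e _ => ?_) ⟨⟨(i, j), hij⟩, Finset.mem_univ _, ?_⟩
    · split_ifs
      · rw [hp]; exact (mul_pos (h0 _) (h0 _)).le
      · exact le_rfl
    · rw [if_pos ⟨hi, hj⟩, hp]; exact mul_pos (h0 _) (h0 _)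
  rcases lt_or_gt_of_ne hij with h | h
  · exact key i hi j hj h
  · exact key j hj i hi h

/-- A finite maximum over the sets of size `r` bounds each of its terms. -/
lemma le_sSup_card {n r : ℕ} (f : Finset (Fin n) → ℝ) {C : Finset (Fin n)} (hC : C.card = r) :
    f C ≤ sSup {x | ∃ C : Finset (Fin n), C.card = r ∧ x = f C} := by
  refine le_csSup (Set.Finite.bddAbove ((Set.finite_range f).subset ?_)) ⟨C, hC, rfl⟩
  rintro x ⟨D, _, rfl⟩
  exact ⟨D, rfl⟩

section Eventually

variable {p : ∀ n, Fin n → Fin n → ℝ} {r : ℕ → ℕ} {θ : ∀ n, Fin n → ℝ}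

lemma theta_bounds (hθ : ∀ n, ∀ i : Fin n, θ n i ∈ Set.Ioo (0 : ℝ) 1) {n : ℕ} (hn : 1 ≤ n) :
    0 < sInf (Set.range (θ n)) ∧ sInf (Set.range (θ n)) ≤ sSup (Set.range (θ n)) ∧
      sSup (Set.range (θ n)) ≤ 1 ∧ (∀ i, sInf (Set.range (θ n)) ≤ θ n i) ∧
      ∀ i, θ n i ≤ sSup (Set.range (θ n)) := by
  have hne : (Set.range (θ n)).Nonempty := ⟨_, ⟨0, hn⟩, rfl⟩
  have hfin := Set.finite_range (θ n)
  obtain ⟨i, hi⟩ := hne.csInf_mem hfin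
  obtain ⟨j, hj⟩ := hne.csSup_mem hfin
  have h1 : ∀ i, sInf (Set.range (θ n)) ≤ θ n i := fun i => csInf_le hfin.bddBelow ⟨i, rfl⟩
  have h2 : ∀ i, θ n i ≤ sSup (Set.range (θ n)) := fun i => le_csSup hfin.bddAbove ⟨i, rfl⟩
  exact ⟨hi ▸ (hθ n i).1, (h1 i).trans (h2 i), hj ▸ (hθ n j).2.le, h1, h2⟩

lemma ratio_bounds (hA3 : Assumption3 θ r)
    {c : ℝ} (hc : 0 < c) : ∀ᶠ n : ℕ in atTop,
      (sSup (Set.range (θ n)) / sInf (Set.range (θ n))) ^ 2 ≤ c * (r n : ℝ) ^ ((2 : ℝ) / 3) ∧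
      (sSup (Set.range (θ n)) / sInf (Set.range (θ n))) ^ 2 ≤
        c * ((n : ℝ) / r n * sInf (Set.range (θ n)) ^ 2) := by
  filter_upwards [hA3.bound hc] with n hn
  rw [Real.norm_of_nonneg (sq_nonneg _), Real.norm_of_nonneg (by positivity)] at hn
  exact ⟨hn.trans (mul_le_mul_of_nonneg_left (min_le_left _ _) hc.le),
    hn.trans (mul_le_mul_of_nonneg_left (min_le_right _ _) hc.le)⟩

/-- Since `θ_max / θ_min ≥ 1`, the bound `(θ_max / θ_min)² = o(r ^ (2/3))` forces `r → ∞`. -/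
lemma tendsto_r (hθ : ∀ n, ∀ i : Fin n, θ n i ∈ Set.Ioo (0 : ℝ) 1) (hA3 : Assumption3 θ r) :
    Tendsto r atTop atTop := by
  rw [tendsto_atTop]
  intro N
  have hN : (0 : ℝ) < ((N : ℝ) + 1) ^ ((2 : ℝ) / 3) := by positivity
  filter_upwards [ratio_bounds hA3 (inv_pos.2 hN), eventually_ge_atTop 1] with n hn hn1
  obtain ⟨ha, hab, -⟩ := theta_bounds hθ hn1
  have h1 : 1 ≤ (sSup (Set.range (θ n)) / sInf (Set.range (θ n))) ^ 2 :=
    one_le_pow₀ ((one_le_div ha).2 hab)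
  have h2 := h1.trans hn.1
  rw [inv_mul_eq_div, one_le_div hN,
    Real.rpow_le_rpow_iff (by positivity) (by positivity) (by norm_num)] at h2
  have h3 : (N : ℝ) ≤ r n := by linarith
  exact_mod_cast h3

lemma eventually_sq_le (hr : Tendsto r atTop atTop)
    (hA1 : Assumption11 p r ∨ Assumption12 p r) : ∀ᶠ n : ℕ in atTop, (r n : ℝ) ^ 2 ≤ n := by
  rcases hA1 with ⟨δ, hδ, hO, -⟩ | ⟨hT, -⟩
  · obtain ⟨K, hK, hO⟩ := hO.exists_pos
    have hδ' : Tendsto (fun n : ℕ => (n : ℝ) ^ δ) atTop atTop :=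
      (tendsto_rpow_atTop hδ.1).comp tendsto_natCast_atTop_atTop
    filter_upwards [hO.bound, hδ'.eventually_ge_atTop K, eventually_ge_atTop 1] with n h1 h2 hn
    have hn0 : (0 : ℝ) < n := by exact_mod_cast hn
    rw [Real.norm_of_nonneg (by positivity), Real.norm_of_nonneg (by positivity)] at h1
    have h3 : (r n : ℝ) ≤ (n : ℝ) ^ ((1 : ℝ) / 2) := by
      calc (r n : ℝ) ≤ K * (n : ℝ) ^ ((1 : ℝ) / 2 - δ) := h1
        _ ≤ (n : ℝ) ^ δ * (n : ℝ) ^ ((1 : ℝ) / 2 - δ) := by gcongr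
        _ = _ := by rw [← Real.rpow_add hn0]; congr 1; ring
    calc (r n : ℝ) ^ 2 ≤ ((n : ℝ) ^ ((1 : ℝ) / 2)) ^ 2 := by gcongr
      _ = (n : ℝ) := by rw [← Real.sqrt_eq_rpow, Real.sq_sqrt hn0.le]
  · filter_upwards [hT.eventually_le_const (show (0 : ℝ) < 1 / 2 by norm_num),
      eventually_ge_atTop 2, hr.eventually_ge_atTop 1] with n h1 hn hrn
    have hn1 : (1 : ℝ) < n := by exact_mod_cast hn
    have hr0 : (0 : ℝ) < r n := by exact_mod_cast hrn
    rw [div_le_iff₀ (Real.log_pos hn1)] at h1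
    rw [← Real.log_le_log_iff (by positivity) (by linarith), Real.log_pow]
    push_cast
    linarith

/-- Either density assumption forces the average edge probability of each set of size `r` to be at
least `n ^ (-1/2)`. -/
lemma eventually_pbar (hθ : ∀ n, ∀ i : Fin n, θ n i ∈ Set.Ioo (0 : ℝ) 1)
    (hp : ∀ n, ∀ i j : Fin n, p n i j = θ n i * θ n j) (hr : Tendsto r atTop atTop)
    (hA1 : Assumption11 p r ∨ Assumption12 p r) :
    ∀ᶠ n : ℕ in atTop, ∀ C : Finset (Fin n), C.card = r n →
      1 / pbar n (p n) C ≤ Real.sqrt n := by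
  have hsq := eventually_sq_le hr hA1
  have hlogn : ∀ᶠ n : ℕ in atTop, (2 : ℝ) ≤ Real.log n :=
    (Real.tendsto_log_atTop.comp tendsto_natCast_atTop_atTop).eventually_ge_atTop 2
  have hlog : ∀ᶠ n : ℕ in atTop, 1 ≤ Real.log ((n : ℝ) / r n) ∧
      Real.log ((n : ℝ) / r n) ≤ Real.log n ∧ 1 ≤ Real.log (r n) := by
    filter_upwards [hsq, hlogn, hr.eventually_ge_atTop 3, eventually_ge_atTop 1]
      with n h1 h2 h3 hn
    have hn0 : (0 : ℝ) < n := by exact_mod_cast hn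
    have hr3 : (3 : ℝ) ≤ r n := by exact_mod_cast h3
    have h4 := Real.log_le_log (by positivity) h1
    rw [Real.log_pow] at h4
    push_cast at h4
    have h5 : 1 ≤ Real.log (r n) := by
      rw [Real.le_log_iff_exp_le (by linarith)]
      have := Real.exp_one_lt_d9
      linarith
    rw [Real.log_div hn0.ne' (by linarith)]
    exact ⟨by linarith, by linarith, h5⟩
  rcases hA1 with ⟨δ, -, -, -, hO⟩ | ⟨-, hO⟩
  · filter_upwards [hO.bound one_pos, hsq, hlog] with n h1 h2 h3 C hC
    rw [one_mul, Real.norm_of_nonneg (div_nonneg (by positivity) (by linarith))] at h1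
    calc 1 / pbar n (p n) C ≤ _ := le_sSup_card (fun C => 1 / pbar n (p n) C) hC
      _ ≤ (r n : ℝ) / Real.log ((n : ℝ) / r n) := (le_abs_self _).trans h1
      _ ≤ (r n : ℝ) / 1 := by gcongr; exact h3.1
      _ ≤ Real.sqrt n := by rw [div_one]; exact Real.le_sqrt_of_sq_le h2
  · filter_upwards [hO.bound (show (0 : ℝ) < 1 / 2 by norm_num), hlog,
      hr.eventually_ge_atTop 2, eventually_ge_atTop 1] with n h1 h3 hr2 hn C hC
    have hn0 : (0 : ℝ) < n := by exact_mod_cast hn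
    have hpos := pbar_pos hr2 (hp n) (fun i => (hθ n i).1) hC
    rw [Real.norm_of_nonneg (div_nonneg (by linarith) (by linarith))] at h1
    have h4 : Real.log (1 / pbar n (p n) C) ≤ Real.log (Real.sqrt n) := by
      calc Real.log (1 / pbar n (p n) C) ≤ _ :=
            le_sSup_card (fun C => Real.log (1 / pbar n (p n) C)) hC
        _ ≤ 1 / 2 * (Real.log ((n : ℝ) / r n) / Real.log (r n)) := (le_abs_self _).trans h1
        _ ≤ 1 / 2 * (Real.log ((n : ℝ) / r n) / 1) := by
          gcongr
          · linarith
          · exact h3.2.2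
        _ ≤ 1 / 2 * Real.log n := by linarith
        _ = Real.log (Real.sqrt n) := by rw [Real.log_sqrt hn0.le]; ring
    exact (Real.log_le_log_iff (by positivity) (by positivity)).1 h4

/-- The smallest weight satisfies `n θ_min² ≥ n ^ (1/4)`. -/
lemma eventually_weight (hθ : ∀ n, ∀ i : Fin n, θ n i ∈ Set.Ioo (0 : ℝ) 1)
    (hp : ∀ n, ∀ i j : Fin n, p n i j = θ n i * θ n j) (hA3 : Assumption3 θ r)
    (hA1 : Assumption11 p r ∨ Assumption12 p r) :
    ∀ᶠ n : ℕ in atTop, (n : ℝ) ≤ (n * sInf (Set.range (θ n)) ^ 2) ^ 4 := by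
  have hr := tendsto_r hθ hA3
  filter_upwards [ratio_bounds hA3 one_pos, eventually_pbar hθ hp hr hA1,
    eventually_sq_le hr hA1, hr.eventually_ge_atTop 2, eventually_ge_atTop 1]
    with n h1 h2 h3 hr2 hn
  have hn1 : (1 : ℝ) ≤ n := by exact_mod_cast hn
  have hr2' : (2 : ℝ) ≤ r n := by exact_mod_cast hr2
  obtain ⟨ha, hab, hb1, haθ, hθb⟩ := theta_bounds hθ hn
  set a := sInf (Set.range (θ n)) with hadef
  set b := sSup (Set.range (θ n)) with hbdef
  have hrn : r n ≤ n := by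
    have : (r n : ℝ) ≤ n := by nlinarith
    exact_mod_cast this
  obtain ⟨C, -, hC⟩ := Finset.exists_subset_card_eq
    (show r n ≤ (Finset.univ : Finset (Fin n)).card by simpa using hrn)
  have hpos := pbar_pos hr2 (hp n) (fun i => (hθ n i).1) hC
  have hple := pbar_le hr2 (hp n) (fun i => (hθ n i).1) hθb hC
  have h4 := h2 C hC
  rw [div_le_iff₀ hpos] at h4
  have hs : 0 < Real.sqrt n := Real.sqrt_pos.2 (by linarith)
  have hss : Real.sqrt n * Real.sqrt n = n := Real.mul_self_sqrt (by linarith)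
  have h5 : 1 ≤ Real.sqrt n * (2 * b ^ 2) := h4.trans (by gcongr)
  have h6 : r n * b ^ 2 ≤ n * a ^ 4 := by
    have h7 := h1.2
    rw [one_mul, div_pow, div_le_iff₀ (by positivity)] at h7
    calc r n * b ^ 2 ≤ r n * ((n : ℝ) / r n * a ^ 2 * a ^ 2) := by gcongr
      _ = n * a ^ 4 := by field_simp
  have h8 : 2 * b ^ 2 ≤ n * a ^ 4 := le_trans (by gcongr) h6
  -- `p̄_C ≤ 2 b²` gives `b² ≥ n ^ (-1/2) / 2`, and `(b / a)² ≤ (n / r) a²` turns this into a lower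
  -- bound for `a`.
  have h9 : Real.sqrt n ≤ (n * a ^ 2) ^ 2 := by
    calc Real.sqrt n = Real.sqrt n * 1 := (mul_one _).symm
      _ ≤ Real.sqrt n * (Real.sqrt n * (2 * b ^ 2)) := by gcongr
      _ = n * (2 * b ^ 2) := by rw [← mul_assoc, hss]
      _ ≤ n * (n * a ^ 4) := by gcongr
      _ = _ := by ring
  calc (n : ℝ) = Real.sqrt n ^ 2 := by rw [sq, hss]
    _ ≤ ((n * a ^ 2) ^ 2) ^ 2 := by gcongr
    _ = _ := by ring

lemma eventually_regime (hθ : ∀ n, ∀ i : Fin n, θ n i ∈ Set.Ioo (0 : ℝ) 1)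
    (hp : ∀ n, ∀ i j : Fin n, p n i j = θ n i * θ n j) (hA3 : Assumption3 θ r)
    (hA1 : Assumption11 p r ∨ Assumption12 p r) {κ : ℝ} (hκ : 0 < κ) (hκ1 : κ ≤ 1 / 1200) :
    ∀ᶠ n : ℕ in atTop, ∃ a b η, Regime n (r n) (θ n) a b η κ := by
  have hr := tendsto_r hθ hA3
  have hlogT : Tendsto (fun n : ℕ => Real.log n) atTop atTop :=
    Real.tendsto_log_atTop.comp tendsto_natCast_atTop_atTop
  have hpow : ∀ k : ℕ, ∀ c : ℝ, 0 < c → ∀ᶠ n : ℕ in atTop, Real.log n ^ k ≤ c * n := by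
    intro k c hc
    have := (Real.isLittleO_pow_log_id_atTop (n := k)).comp_tendsto
      (tendsto_natCast_atTop_atTop (R := ℝ))
    filter_upwards [this.bound hc] with n hn
    simp only [Function.comp_apply, id_eq, Real.norm_natCast] at hn
    exact (le_abs_self _).trans hn
  filter_upwards [ratio_bounds hA3 (show 0 < κ ^ 2 by positivity),
    ratio_bounds hA3 (show 0 < κ ^ 2 / 8 by positivity), eventually_sq_le hr hA1,
    hr.eventually_ge_atTop 2, eventually_ge_atTop 1, eventually_weight hθ hp hA3 hA1,
    hlogT.eventually_ge_atTop (2 / κ ^ 2), hpow 16 (1 / 4 ^ 4) (by norm_num),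
    hpow 4 ((κ ^ 2 / 8) ^ 4) (by positivity)] with n h1 h2 h3 h4 hn h5 h6 h7 h8
  obtain ⟨ha, hab, hb1, haθ, hθb⟩ := theta_bounds hθ hn
  rw [div_le_iff₀ (by positivity)] at h6
  have hω : 0 ≤ n * sInf (Set.range (θ n)) ^ 2 := by positivity
  refine ⟨_, _, _, Regime.of_ratio ha hab hb1 haθ hθb h4 h3 hκ hκ1 (by linarith) h1.1 h2.2 ?_ ?_⟩
  · have h9 : (8 * Real.log n) ^ 4 ≤ (κ ^ 2 * (n * sInf (Set.range (θ n)) ^ 2)) ^ 4 := by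
      calc (8 * Real.log n) ^ 4 = 8 ^ 4 * Real.log n ^ 4 := by ring
        _ ≤ 8 ^ 4 * ((κ ^ 2 / 8) ^ 4 * n) := by gcongr
        _ = (κ ^ 2) ^ 4 * n := by ring
        _ ≤ (κ ^ 2) ^ 4 * (n * sInf (Set.range (θ n)) ^ 2) ^ 4 := by gcongr
        _ = _ := by ring
    exact le_of_pow_le_pow_left₀ (by norm_num) (by positivity) h9
  · have h9 : (4 * Real.log n ^ 4) ^ 4 ≤ (n * sInf (Set.range (θ n)) ^ 2) ^ 4 := by
      calc (4 * Real.log (n : ℝ) ^ 4) ^ 4 = (4 : ℝ) ^ 4 * Real.log (n : ℝ) ^ 16 := by ring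
        _ ≤ (4 : ℝ) ^ 4 * (1 / 4 ^ 4 * (n : ℝ)) := by gcongr
        _ = (n : ℝ) := by ring
        _ ≤ _ := h5
    exact le_of_pow_le_pow_left₀ (by norm_num) hω h9

end Eventually

/-- **Corollary 3.** Suppose the edge probabilities are rank-1, `p_{ij} = θ_i θ_j` with
`θ_i ∈ (0,1)`, Assumption 3 holds, and either Assumption 1.1 or Assumption 1.2 holds. If
eventually every community `C` of size `r n` satisfies the scan condition
`max_{∅ ≠ D ⊆ C} E₀[e(D)] h(λ_C - 1)/(|D| log(n/|D|)) ≥ 1 + ε`, then the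
unknown-probability scan test with parameter `ε` is asymptotically powerful. -/
theorem unknown_scan_test_powerful_corollary
    (p : ∀ n, Fin n → Fin n → ℝ) (r : ℕ → ℕ) (lam : ∀ n, Finset (Fin n) → ℝ)
    (θ : ∀ n, Fin n → ℝ)
    (hθ : ∀ n, ∀ i : Fin n, θ n i ∈ Set.Ioo (0 : ℝ) 1)
    (hpθ : ∀ n, ∀ i j : Fin n, p n i j = θ n i * θ n j)
    (hr : ∀ n, 2 ≤ n → 1 ≤ r n ∧ r n < n)
    (hlam : ∀ n, ∀ C : Finset (Fin n), C.card = r n → 1 ≤ lam n C)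
    (hlamp : ∀ n, ∀ C : Finset (Fin n), C.card = r n →
      ∀ i ∈ C, ∀ j ∈ C, lam n C * p n i j ≤ 1)
    (hA3 : Assumption3 θ r)
    (hA1 : Assumption11 p r ∨ Assumption12 p r)
    (ε : ℝ) (hε : 0 < ε)
    (hcond : ∀ᶠ n in atTop, ∀ C : Finset (Fin n), C.card = r n →
      1 + ε ≤ condSup n (p n) (lam n C) C) :
    Tendsto (fun n => risk n (r n) (p n) (lam n) (scanTestU n (r n) ε)) atTop (nhds 0) := by
  set κ := ε / (1200 * (1 + ε)) with hκdef
  have hκ : 0 < κ := by positivity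
  have hκε : 1200 * (κ * (1 + ε)) ≤ ε := by
    rw [hκdef]
    apply le_of_eq
    field_simp
  have hκ1 : κ ≤ 1 / 1200 := by
    rw [hκdef, div_le_div_iff₀ (by positivity) (by norm_num)]; linarith
  set ζ := ε / (6 * (1 + ε)) with hζ
  have hζ0 : 0 < ζ := by positivity
  have hlogT : Tendsto (fun n : ℕ => Real.log n) atTop atTop :=
    Real.tendsto_log_atTop.comp tendsto_natCast_atTop_atTop
  have hinv : Tendsto (fun n : ℕ => 1 / (n : ℝ)) atTop (nhds 0) :=
    tendsto_one_div_atTop_nhds_zero_nat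
  have hE1 : Tendsto (fun n : ℕ => Real.exp (1 - ε / 12 * Real.log n)) atTop (nhds 0) := by
    refine Real.tendsto_exp_atBot.comp ?_
    exact tendsto_atBot_add_const_left _ 1
      (tendsto_neg_atTop_atBot.comp (hlogT.const_mul_atTop (show 0 < ε / 12 by positivity)))
  have hE2 : Tendsto (fun n : ℕ => Real.exp (-(ζ ^ 2 * (r n : ℝ) ^ ((1 : ℝ) / 3) / 8)))
      atTop (nhds 0) := by
    refine Real.tendsto_exp_atBot.comp (tendsto_neg_atTop_atBot.comp ?_)
    refine Tendsto.atTop_div_const (by norm_num) (Tendsto.const_mul_atTop (by positivity) ?_)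
    exact (tendsto_rpow_atTop (by norm_num)).comp
      (tendsto_natCast_atTop_atTop.comp (tendsto_r hθ hA3))
  have hbound : Tendsto (fun n : ℕ =>
      (1 / (n : ℝ) + 2 * (1 / n) + 2 * Real.exp (1 - ε / 12 * Real.log n)) +
      (Real.exp (-(ζ ^ 2 * (r n : ℝ) ^ ((1 : ℝ) / 3) / 8)) + 1 / n + 1 / n)) atTop (nhds 0) := by
    simpa using ((hinv.add (hinv.const_mul 2)).add (hE1.const_mul 2)).add
      ((hE2.add hinv).add hinv)
  have hreg := eventually_regime hθ hpθ hA3 hA1 hκ hκ1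
  refine tendsto_of_tendsto_of_tendsto_of_le_of_le' tendsto_const_nhds hbound ?_ ?_
  · filter_upwards [hreg] with n hn
    obtain ⟨a, b, η, R⟩ := hn
    refine add_nonneg (prob_nonneg (R.nullW_mem (hpθ n)) _) (Real.sSup_nonneg ?_)
    rintro x ⟨C, hC, rfl⟩
    exact prob_nonneg
      (fun e => (R.altW_mem (hpθ n) (hlam n C hC) (hlamp n C hC) e).2) _
  · filter_upwards [hreg, hcond, hE1.eventually_le_const (show (0 : ℝ) < 1 / 2 by norm_num)]
      with n hn hc hq
    obtain ⟨a, b, η, R⟩ := hn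
    refine add_le_add (R.typeI (hpθ n) hε hκε hq) (Real.sSup_le ?_ (by positivity))
    rintro x ⟨C, hC, rfl⟩
    exact R.typeII (hpθ n) hε hκε hζ hC (hlam n C hC) (hlamp n C hC) (hc C hC)

end CommunityDetection
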